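/- Let l be a positive integer, ζ a primitive l-th root of unity, and μ = (1^{m_1}, 2^{m_2}, …, n^{m_n}) a partition of a positive integer n. For each i, write m_i = l·q_i + r_i with 0 ≤ r_i ≤ l−1, and set μ̄ = (1^{r_1}, 2^{r_2}, …, n^{r_n}). Then Q'_μ(x; q, ζ) = (Q'_{(1^l)}(x;q,ζ))^{q_1} · (Q'_{(2^l)}(x;q,ζ))^{q_2} · ⋯ · (Q'_{(n^l)}(x;q,ζ))^{q_n} · Q'_{μ̄}(x; q, ζ). -/

import Mathlib

open MvPolynomial

noncomputable section MacdonaldPreliminaries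

/-! ### Base fields: `KK = ℂ(q)` and `FF = ℂ(q)(t)` -/

/-- The field `ℂ(q)` of rational functions in the indeterminate `q`. -/
abbrev KK : Type := RatFunc ℂ

/-- The field `ℂ(q)(t) = ℂ(q,t)`, rational functions in `t` over `ℂ(q)`. -/
abbrev FF : Type := RatFunc KK

/-- The indeterminate `q`, as an element of `ℂ(q)`. -/
def qK : KK := RatFunc.X

/-- The indeterminate `q`, as an element of `ℂ(q,t)`. -/
def qF : FF := RatFunc.C qK

/-- The indeterminate `t`, as an element of `ℂ(q,t)`. -/
def tF : FF := RatFunc.X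

/-! ### The ring of symmetric functions

We model the ring `Λ_R` of symmetric functions over `R` as the free commutative
`R`-algebra on the power sums `p₁, p₂, p₃, …`, i.e. as the polynomial ring in
countably many variables `X k`, `k : ℕ+`, where `X k` represents the power sum `p_k`. -/

/-- The ring of symmetric functions over `R`: polynomials in the power sums `p_k = X k`. -/
abbrev SymFn (R : Type) [CommSemiring R] : Type := MvPolynomial ℕ+ R

section Core

variable {R : Type} [Field R]

/-- The power sum `p_d` for `d : ℕ`, with `p_0 = 1` by convention. -/
def pN (d : ℕ) : SymFn R := if h : 0 < d then X (⟨d, h⟩ : ℕ+) else 1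

/-- `p_λ = ∏ p_{λᵢ}` for a partition `λ` given as a multiset of positive parts. -/
def pPar (lam : Multiset ℕ+) : SymFn R := (lam.map fun k => (X k : SymFn R)).prod

/-- The complete homogeneous symmetric functions, defined by Newton's recursion
`n·h_n = ∑_{i=1}^n p_i · h_{n-i}` with `h_0 = 1`. -/
def hsym : ℕ → SymFn R
  | 0 => 1
  | (n+1) => (((n : R) + 1)⁻¹) • ∑ i ∈ Finset.range (n+1),
      (X (⟨i+1, Nat.succ_pos i⟩ : ℕ+) : SymFn R) * hsym (n - i)
decreasing_by exact Nat.lt_succ_of_le (Nat.sub_le n i)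

/-- `h_z` for an integer index, vanishing for negative `z` (used in Jacobi–Trudi). -/
def hInt (z : ℤ) : SymFn R := if 0 ≤ z then hsym (R := R) z.toNat else 0

/-- The parts of a partition (a multiset of positive integers), sorted decreasingly. -/
def descParts (lam : Multiset ℕ+) : List ℕ :=
  ((lam.map fun a : ℕ+ => (a : ℕ)).sort (· ≤ ·)).reverse

/-- The weight `|λ|` of a partition. -/
def wt (lam : Multiset ℕ+) : ℕ := (lam.map fun a : ℕ+ => (a : ℕ)).sum

/-- The Schur function `s_λ`, via the Jacobi–Trudi formula
`s_λ = det(h_{λᵢ - i + j})₁≤i,j≤ℓ`. -/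
def schur (lam : Multiset ℕ+) : SymFn R :=
  Matrix.det (Matrix.of fun i j : Fin (Multiset.card lam) =>
    hInt (R := R) ((((descParts lam).getD i 0 : ℕ) : ℤ) + (j : ℤ) - (i : ℤ)))

/-- `h_ν = ∏ h_{νⱼ}` for a partition `ν`. -/
def hPar (nu : Multiset ℕ+) : SymFn R := (nu.map fun a => hsym (R := R) (a : ℕ)).prod

/-! ### Inner products -/

/-- The `(q,t)`-deformed weight `z_λ(q,t)` attached to the monomial `∏ (X k)^(m k)`,
namely `∏_k (m k)! · k^(m k) · ((1-q^k)/(1-t^k))^(m k)`. -/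
def zwtQT (q t : R) (m : ℕ+ →₀ ℕ) : R :=
  ∏ k ∈ m.support,
    ((Nat.factorial (m k) : R) * ((k : ℕ) : R) ^ (m k) *
      ((1 - q ^ (k : ℕ)) / (1 - t ^ (k : ℕ))) ^ (m k))

/-- The Macdonald inner product `⟨·,·⟩_{q,t}`, defined on the power sum basis by
`⟨p_λ, p_μ⟩_{q,t} = δ_{λμ} z_λ(q,t)`. -/
def innerQT (q t : R) (f g : SymFn R) : R :=
  ∑ m ∈ f.support, MvPolynomial.coeff m f * MvPolynomial.coeff m g * zwtQT q t m

/-- The classical weight `z_λ = ∏_k (m k)! k^(m k)` attached to a monomial. -/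
def zwtH (m : ℕ+ →₀ ℕ) : R :=
  ∏ k ∈ m.support, ((Nat.factorial (m k) : R) * ((k : ℕ) : R) ^ (m k))

/-- The standard Hall inner product, `⟨p_λ, p_μ⟩ = δ_{λμ} z_λ`. -/
def innerH (f g : SymFn R) : R :=
  ∑ m ∈ f.support, MvPolynomial.coeff m f * MvPolynomial.coeff m g * zwtH (R := R) m

/-- The internal (Kronecker) product `⋆`, determined by `p_λ ⋆ p_μ = δ_{λμ} z_λ p_λ`. -/
def star (f g : SymFn R) : SymFn R :=
  ∑ m ∈ f.support,
    MvPolynomial.monomial m (MvPolynomial.coeff m f * MvPolynomial.coeff m g * zwtH (R := R) m)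

/-! ### Dominance order and the Macdonald basis -/

/-- Sum of the `k` largest parts of `λ`. -/
def pSum (lam : Multiset ℕ+) (k : ℕ) : ℕ := ((descParts lam).take k).sum

/-- `μ` is strictly dominated by `λ`: same weight, `μ ≠ λ`, and all partial sums of the
decreasingly sorted parts of `μ` are at most those of `λ`. -/
def StrictDom (mu lam : Multiset ℕ+) : Prop :=
  mu ≠ lam ∧ wt mu = wt lam ∧ ∀ k, pSum mu k ≤ pSum lam k

/-- Characterization of the Macdonald basis `P_λ(x;q,t)` (obtained from the Schur basis by
Gram–Schmidt orthogonalization w.r.t. `⟨·,·⟩_{q,t}`): `P_λ` is unitriangular with respect to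
the Schur functions of strictly dominated partitions, and the `P_λ` are pairwise orthogonal. -/
def IsMacdonaldBasis (q t : R) (P : Multiset ℕ+ → SymFn R) : Prop :=
  (∀ lam, P lam - schur lam ∈
      Submodule.span R ((schur (R := R)) '' {mu | StrictDom mu lam})) ∧
  (∀ lam mu, lam ≠ mu → innerQT q t (P lam) (P mu) = 0)

/-- `Q_λ = P_λ / ⟨P_λ, P_λ⟩_{q,t}`. -/
def Qfam (q t : R) (P : Multiset ℕ+ → SymFn R) (lam : Multiset ℕ+) : SymFn R :=
  (innerQT q t (P lam) (P lam))⁻¹ • P lam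

/-- The algebra endomorphism of `Λ_R` rescaling each power sum: `p_k ↦ g k · p_k`. -/
def scaleHom (g : ℕ+ → R) : SymFn R →ₐ[R] SymFn R :=
  aeval fun k : ℕ+ => (C (g k) * X k : SymFn R)

/-- The modified Macdonald polynomial `Q'_λ(x;q,t) = Q_λ(((1-q)/(1-t))·x; q,t)`,
the image of `Q_λ` under `p_k ↦ ((1-q^k)/(1-t^k))·p_k`. -/
def Qprime (q t : R) (P : Multiset ℕ+ → SymFn R) (lam : Multiset ℕ+) : SymFn R :=
  scaleHom (fun k => (1 - q ^ (k : ℕ)) / (1 - t ^ (k : ℕ))) (Qfam q t P lam)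

/-! ### Plethysm -/

/-- Plethysm by the power sum on the left: `p_l ∘ f`, the ring endomorphism `p_k ↦ p_{lk}`
applied to `f`. -/
def plethP (l : ℕ+) : SymFn R →ₐ[R] SymFn R :=
  aeval fun k : ℕ+ => (X (l * k) : SymFn R)

/-- General plethysm `g ∘ f`: the algebra homomorphism in `g` sending `p_k` to `p_k ∘ f`. -/
def pleth (g f : SymFn R) : SymFn R :=
  aeval (fun k : ℕ+ => plethP k f) g

/-! ### Cells of a partition: arms, legs, the constants `c_μ`, `c'_μ` and `n(μ)` -/

/-- Arm length of the (0-indexed) cell `(i,j)` of `λ`: `λ_i - j - 1`. -/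
def armM (lam : Multiset ℕ+) (i j : ℕ) : ℕ := (descParts lam).getD i 0 - (j + 1)

/-- Leg length of the (0-indexed) cell `(i,j)` of `λ`: the number of cells below it
in the same column. -/
def legM (lam : Multiset ℕ+) (i j : ℕ) : ℕ :=
  ((List.range (descParts lam).length).filter
    (fun i' => decide (i < i') && decide (j < (descParts lam).getD i' 0))).length

/-- Product of a quantity over all cells of the partition `λ`. -/
def cellProd {S : Type} [CommMonoid S] (lam : Multiset ℕ+) (f : ℕ → ℕ → S) : S :=
  ∏ i ∈ Finset.range (descParts lam).length,
    ∏ j ∈ Finset.range ((descParts lam).getD i 0), f i j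

/-- `c_μ(q,t) = ∏_{s∈μ} (1 - q^{a(s)} t^{l(s)+1})`. -/
def cLow (q t : R) (lam : Multiset ℕ+) : R :=
  cellProd lam fun i j => 1 - q ^ (armM lam i j) * t ^ (legM lam i j + 1)

/-- `c'_μ(q,t) = ∏_{s∈μ} (1 - q^{a(s)+1} t^{l(s)})`. -/
def cUp (q t : R) (lam : Multiset ℕ+) : R :=
  cellProd lam fun i j => 1 - q ^ (armM lam i j + 1) * t ^ (legM lam i j)

/-- `n(λ) = ∑ (i-1)·λ_i`. -/
def nInv (lam : Multiset ℕ+) : ℕ :=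
  ∑ i ∈ Finset.range (descParts lam).length, i * (descParts lam).getD i 0

/-- The modified Macdonald polynomial of Haglund–Haiman–Loehr,
`H̃_μ(x;q,t) = t^{n(μ)} J_μ(x/(1-t⁻¹); q, t⁻¹)`, where `J_μ(x;q,t) = c_μ(q,t) P_μ(x;q,t)`
and `Pinv` is the Macdonald basis at parameters `(q, t⁻¹)`. -/
def Htilde (q t : R) (Pinv : Multiset ℕ+ → SymFn R) (lam : Multiset ℕ+) : SymFn R :=
  C (t ^ nInv lam) *
    scaleHom (fun k => (1 - (t⁻¹) ^ (k : ℕ))⁻¹) (C (cLow q t⁻¹ lam) * Pinv lam)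

/-! ### Cyclic characters -/

/-- The Ramanujan (Von Sterneck) sum `c(j,d)`: the sum of the `j`-th powers of the primitive
`d`-th roots of unity (computed in the domain `R`). -/
def cRam [IsDomain R] (j d : ℕ) : R := ∑ z ∈ primitiveRoots d R, z ^ j

/-- The Frobenius characteristic `l_k^{(j)} = (1/k) ∑_{d ∣ k} c(j,d) p_d^{k/d}` of the
representation of `S_k` induced from the `j`-th character of the cyclic subgroup generated
by a `k`-cycle. -/
def lchar [IsDomain R] (k j : ℕ) : SymFn R :=
  ((k : R))⁻¹ • ∑ d ∈ Nat.divisors k, (cRam (R := R) j d) • ((pN (R := R) d) ^ (k / d))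

end Core

/-! ### Specialization `t = ζ` and evaluation maps -/

/-- Evaluation of a rational function in `t` over `ℂ(q)` at a point `c : ℂ(q)`. -/
def evalT (c : KK) (x : FF) : KK := RatFunc.eval (RingHom.id KK) c x

/-- Coefficientwise specialization `t = c` of a symmetric function over `ℂ(q,t)`. -/
def specT (c : KK) (f : SymFn FF) : SymFn KK :=
  ∑ m ∈ f.support, MvPolynomial.monomial m (evalT c (MvPolynomial.coeff m f))

/-- Evaluation `f ↦ f(1, ζ, ζ², …, ζ^{l-1}; q, ζ)`: substitute the finite alphabet
`x_i = ζ^{i-1}` (`1 ≤ i ≤ l`) and then specialize `t = ζ`. -/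
def macEvalRoots (l : ℕ) (z : ℂ) (f : SymFn FF) : KK :=
  evalT (RatFunc.C z)
    ((aeval fun k : ℕ+ =>
        ∑ i ∈ Finset.range l, (RatFunc.C (RatFunc.C z) : FF) ^ (i * (k : ℕ))) f)

/-- Evaluation of a symmetric function over `ℂ(q,t)` at the finite alphabet
`(1, t, t², …, t^{l-1})`. -/
def evalAlphT (l : ℕ) : SymFn FF →ₐ[FF] FF :=
  aeval fun k : ℕ+ => ∑ i ∈ Finset.range l, tF ^ (i * (k : ℕ))

/-- Congruence to `0` modulo the cyclotomic polynomial `Φ_l(t)` for a rational function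
in `t`: `x = Φ_l(t) · (a/b)` with `b` coprime to `Φ_l`. -/
def CongrModPhi (l : ℕ) (x : FF) : Prop :=
  ∃ a b : Polynomial KK, IsCoprime b (Polynomial.cyclotomic l KK) ∧
    x = algebraMap (Polynomial KK) FF (Polynomial.cyclotomic l KK) *
      (algebraMap (Polynomial KK) FF a / algebraMap (Polynomial KK) FF b)

/-- The finite set of all partitions of `n`, as multisets of positive integers. -/
def partitionsOf (n : ℕ) : Finset (Multiset ℕ+) :=
  Finset.univ.image fun pi : Nat.Partition n =>
    pi.parts.attach.map fun a => (⟨a.1, pi.parts_pos a.2⟩ : ℕ+)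

end MacdonaldPreliminaries

open MvPolynomial
noncomputable section MacAuxSec1
namespace MacAux

/-- The total order on partitions used throughout: compare multiplicities at the
largest part where they differ. -/
def key (μ : Multiset ℕ+) : Colex (ℕ+ →₀ ℕ) := toColex (Multiset.toFinsupp μ)

lemma key_add (μ ν : Multiset ℕ+) : key (μ + ν) = key μ + key ν := by
  simp [key]

lemma key_inj {μ ν : Multiset ℕ+} (h : key μ = key ν) : μ = ν := by
  have : Multiset.toFinsupp μ = Multiset.toFinsupp ν := by
    simpa [key] using h
  exact Multiset.toFinsupp.injective this

lemma key_lt_iff {μ ν : Multiset ℕ+} : key μ < key ν ↔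
    ∃ k, (∀ j, k < j → μ.count j = ν.count j) ∧ μ.count k < ν.count k := by
  rw [key, key, Finsupp.Colex.lt_iff]
  simp [Multiset.toFinsupp_apply]

lemma key_lt_of_mem {μ ν : Multiset ℕ+} {k : ℕ+} (h : ∀ a ∈ μ, a < k) (hk : k ∈ ν) :
    key μ < key ν := by
  rcases lt_trichotomy (key μ) (key ν) with h1 | h1 | h1
  · exact h1
  · rw [key_inj h1] at h
    exact absurd (h k hk) (lt_irrefl _)
  · obtain ⟨j, hj, hj2⟩ := key_lt_iff.1 h1
    have hm : j ∈ μ := by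
      rw [← Multiset.count_pos]; omega
    have := hj k (h j hm)
    have h0 : μ.count k = 0 := Multiset.count_eq_zero.2 fun hh => lt_irrefl _ (h k hh)
    have h3 : 0 < ν.count k := Multiset.count_pos.2 hk
    omega

lemma key_add_lt_left {μ ν : Multiset ℕ+} (ρ : Multiset ℕ+) (h : key μ < key ν) :
    key (ρ + μ) < key (ρ + ν) := by
  rw [key_add, key_add]; exact add_lt_add_right h _

lemma key_add_lt_right {μ ν : Multiset ℕ+} (ρ : Multiset ℕ+) (h : key μ < key ν) :
    key (μ + ρ) < key (ν + ρ) := by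
  rw [add_comm μ, add_comm ν]; exact key_add_lt_left ρ h

lemma key_of_add_lt_left {μ ν : Multiset ℕ+} (ρ : Multiset ℕ+) 
    (h : key (ρ + μ) < key (ρ + ν)) : key μ < key ν := by
  rw [key_add, key_add] at h; exact lt_of_add_lt_add_left h

lemma key_zero_lt {μ : Multiset ℕ+} (h : μ ≠ 0) : key 0 < key μ := by
  obtain ⟨k, hk⟩ := Multiset.exists_mem_of_ne_zero h
  exact key_lt_of_mem (by simp) hk

/-- Induction on multisets, adding the largest part last. -/
lemma maxInd {P : Multiset ℕ+ → Prop} (h0 : P 0)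
    (h1 : ∀ n μ, (∀ a ∈ μ, a ≤ n) → P μ → P (n ::ₘ μ)) (μ : Multiset ℕ+) : P μ := by
  induction μ using Multiset.strongInductionOn with
  | _ μ ih =>
    by_cases hμ : μ = 0
    · rw [hμ]; exact h0
    · obtain ⟨k, hk⟩ := Multiset.exists_mem_of_ne_zero hμ
      obtain ⟨n, hn, hmax⟩ := Finset.exists_max_image μ.toFinset id ⟨k, by simpa using hk⟩
      have hn' : n ∈ μ := by simpa using hn
      rw [← Multiset.cons_erase hn']
      refine h1 n _ (fun a ha => hmax a (by simpa using Multiset.mem_of_mem_erase ha)) 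
        (ih _ (Multiset.erase_lt.2 hn'))

lemma descParts_zero : descParts 0 = [] := by simp [descParts]

lemma descParts_cons {n : ℕ+} {μ : Multiset ℕ+} (h : ∀ a ∈ μ, a ≤ n) :
    descParts (n ::ₘ μ) = (n : ℕ) :: descParts μ := by
  unfold descParts
  rw [List.reverse_eq_iff, List.reverse_cons, List.reverse_reverse]
  refine List.Perm.eq_of_pairwise (le := (· ≤ ·)) (fun a b _ _ h1 h2 => le_antisymm h1 h2) (Multiset.pairwise_sort _ _) ?_ ?_
  · rw [List.pairwise_append]
    refine ⟨Multiset.pairwise_sort _ _, by simp, ?_⟩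
    intro a ha b hb
    simp only [Multiset.mem_sort, Multiset.mem_map] at ha
    obtain ⟨c, hc, rfl⟩ := ha
    simp only [List.mem_singleton] at hb
    rw [hb]; exact_mod_cast h c hc
  · rw [← Multiset.coe_eq_coe]
    simp only [Multiset.sort_eq, ← Multiset.coe_add, Multiset.map_cons]
    rw [add_comm]; rfl

lemma descParts_perm (μ : Multiset ℕ+) : (descParts μ : Multiset ℕ) = μ.map (fun a : ℕ+ => (a:ℕ)) := by
  simp [descParts]

lemma wt_zero : wt 0 = 0 := by simp [wt]
lemma wt_cons (n : ℕ+) (μ : Multiset ℕ+) : wt (n ::ₘ μ) = n + wt μ := by simp [wt]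
lemma wt_add (ν μ : Multiset ℕ+) : wt (ν + μ) = wt ν + wt μ := by simp [wt]
lemma wt_singleton (n : ℕ+) : wt {n} = n := by simp [wt]
lemma wt_nsmul (k : ℕ) (μ : Multiset ℕ+) : wt (k • μ) = k * wt μ := by
  simp [wt, Multiset.map_nsmul, Multiset.sum_nsmul]
lemma wt_eq_zero {μ : Multiset ℕ+} (h : wt μ = 0) : μ = 0 := by
  induction μ using Multiset.induction with
  | empty => rfl
  | cons a s _ => rw [wt_cons] at h; have := a.pos; omega

lemma le_wt_of_mem {μ : Multiset ℕ+} {a : ℕ+} (h : a ∈ μ) : (a:ℕ) ≤ wt μ := by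
  rw [← Multiset.cons_erase h, wt_cons]; omega

lemma pSum_lt_of_key_lt (μ : Multiset ℕ+) : ∀ lam, key lam < key μ → ∃ j, pSum lam j < pSum μ j := by
  induction μ using maxInd with
  | h0 => 
    intro lam h
    exfalso
    by_cases hl : lam = 0
    · rw [hl] at h; exact lt_irrefl _ h
    · exact lt_asymm h (key_zero_lt hl)
  | h1 n μ hn ih =>
    intro lam
    induction lam using maxInd with
    | h0 => 
      intro _
      refine ⟨1, ?_⟩
      have := n.pos
      simp [pSum, descParts_cons hn, descParts_zero]
    | h1 m lam hm _ =>
      intro h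
      rcases lt_trichotomy m n with h1 | h1 | h1
      · refine ⟨1, ?_⟩
        simpa [pSum, descParts_cons hn, descParts_cons hm] using h1
      · subst h1
        rw [← Multiset.singleton_add, ← Multiset.singleton_add] at h
        obtain ⟨j, hj⟩ := ih lam (key_of_add_lt_left _ h)
        refine ⟨j+1, ?_⟩
        simpa [pSum, descParts_cons hn, descParts_cons hm] using hj
      · exfalso
        refine lt_asymm h (key_lt_of_mem (k := m) ?_ (by simp))
        intro a ha
        rcases Multiset.mem_cons.1 ha with rfl | ha
        · exact h1
        · exact lt_of_le_of_lt (hn a ha) h1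

lemma key_lt_of_strictDom {μ lam : Multiset ℕ+} (h : StrictDom μ lam) : key μ < key lam := by
  rcases lt_trichotomy (key μ) (key lam) with h1 | h1 | h1
  · exact h1
  · exact absurd (key_inj h1) h.1
  · obtain ⟨j, hj⟩ := pSum_lt_of_key_lt _ _ h1
    exact absurd (h.2.2 j) (by omega)

lemma finite_wt (n : ℕ) : {μ : Multiset ℕ+ | wt μ = n}.Finite := by
  have hinj : Function.Injective (fun μ : Multiset ℕ+ => μ.map (fun a : ℕ+ => (a:ℕ))) :=
    Multiset.map_injective PNat.coe_injective
  have : Set.Finite (Set.range (fun p : Nat.Partition n => p.parts)) := Set.finite_range _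
  refine Set.Finite.of_finite_image (f := fun μ : Multiset ℕ+ => μ.map (fun a : ℕ+ => (a:ℕ))) (this.subset ?_) hinj.injOn
  rintro _ ⟨μ, hμ, rfl⟩
  refine ⟨⟨μ.map (fun a : ℕ+ => (a:ℕ)), ?_, hμ⟩, rfl⟩
  intro i hi
  obtain ⟨a, _, rfl⟩ := Multiset.mem_map.1 hi
  exact a.pos

/-- Eigenvalues, on lists of parts. -/
def eL {R : Type} [CommRing R] (q s : R) : List ℕ → R
  | [] => 1
  | n :: L => s * eL q s L + (1 - s) * q ^ n

/-- The eigenvalue attached to a partition. -/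
def eig {R : Type} [CommRing R] (q s : R) (μ : Multiset ℕ+) : R := eL q s (descParts μ)

lemma eig_zero {R : Type} [CommRing R] (q s : R) : eig q s 0 = 1 := by simp [eig, descParts_zero, eL]
lemma eig_cons {R : Type} [CommRing R] (q s : R) {n : ℕ+} {μ : Multiset ℕ+} (h : ∀ a ∈ μ, a ≤ n) :
    eig q s (n ::ₘ μ) = s * eig q s μ + (1 - s) * q ^ (n:ℕ) := by
  simp [eig, descParts_cons h, eL]

lemma map_eL {R S : Type} [CommRing R] [CommRing S] (f : R →+* S) (q s : R) (L : List ℕ) :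
    f (eL q s L) = eL (f q) (f s) L := by
  induction L with
  | nil => simp [eL]
  | cons n L ih => simp [eL, ih]

lemma map_eig {R S : Type} [CommRing R] [CommRing S] (f : R →+* S) (q s : R) (μ : Multiset ℕ+) :
    f (eig q s μ) = eig (f q) (f s) μ := map_eL f q s _

end MacAux
end MacAuxSec1

open MvPolynomial
noncomputable section MacAuxSec2
namespace MacAux
set_option linter.unusedSectionVars false

section ODE
variable {S : Type} [CommRing S] [Algebra ℚ S]

lemma rat_cancel {n : ℕ} {x y : S} (h : ((n : S) + 1) * x = ((n : S) + 1) * y) : x = y := by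
  have key : ∀ z : S, (((n:ℚ)+1)⁻¹) • (((n : S) + 1) * z) = z := by
    intro z
    have h1 : ((n : S) + 1) = algebraMap ℚ S ((n:ℚ)+1) := by simp
    rw [h1, ← Algebra.smul_def, smul_smul, inv_mul_cancel₀, one_smul]
    positivity
  rw [← key x, h, key y]

lemma ode_unique {L Y Z : PowerSeries S} (hY : PowerSeries.derivative S Y = L * Y)
    (hZ : PowerSeries.derivative S Z = L * Z)
    (h0 : PowerSeries.coeff 0 Y = PowerSeries.coeff 0 Z) : Y = Z := by
  ext n
  induction n using Nat.strong_induction_on with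
  | _ n ih =>
    cases n with
    | zero => exact h0
    | succ n =>
      have h1 := congrArg (PowerSeries.coeff n) hY
      have h2 := congrArg (PowerSeries.coeff n) hZ
      rw [PowerSeries.coeff_derivative, PowerSeries.coeff_mul] at h1 h2
      apply rat_cancel (n := n)
      rw [mul_comm, h1, mul_comm, h2]
      apply Finset.sum_congr rfl
      intro p hp
      rw [ih p.2 (by have := Finset.HasAntidiagonal.mem_antidiagonal.1 hp; omega)]

lemma derivative_map {S' : Type} [CommRing S'] (f : S →+* S') (Y : PowerSeries S) :
    PowerSeries.derivative S' (PowerSeries.map f Y) = PowerSeries.map f (PowerSeries.derivative S Y) := by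
  ext n
  simp [PowerSeries.coeff_derivative]

end ODE

variable {R : Type} [CommRing R] [Algebra ℚ R]

/-- Solution of `n A_n = ∑ a_i p_i A_{n-i}`. -/
def Eseq (a : ℕ → R) : ℕ → SymFn R
  | 0 => 1
  | (n+1) => (((n : ℚ) + 1)⁻¹) • ∑ i ∈ Finset.range (n+1),
      C (a (i+1)) * (X (Nat.succPNat i) : SymFn R) * Eseq a (n - i)
decreasing_by exact Nat.lt_succ_of_le (Nat.sub_le n i)

lemma Eseq_zero (a : ℕ → R) : Eseq a 0 = 1 := by rw [Eseq]

lemma Eseq_succ (a : ℕ → R) (n : ℕ) : ((n : SymFn R) + 1) * Eseq a (n+1) =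
    ∑ i ∈ Finset.range (n+1),
      C (a (i+1)) * (X (Nat.succPNat i) : SymFn R) * Eseq a (n - i) := by
  rw [Eseq]
  have h1 : ((n : SymFn R) + 1) = algebraMap ℚ (SymFn R) ((n:ℚ)+1) := by simp
  rw [h1, ← Algebra.smul_def, smul_smul, mul_inv_cancel₀, one_smul]
  positivity

def gen (a : ℕ → R) : PowerSeries (SymFn R) := PowerSeries.mk (Eseq a)
def lgen (a : ℕ → R) : PowerSeries (SymFn R) :=
  PowerSeries.mk fun i => C (a (i+1)) * (X (Nat.succPNat i) : SymFn R)

lemma gen_deriv (a : ℕ → R) : PowerSeries.derivative _ (gen a) = lgen a * gen a := by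
  ext1 n
  rw [PowerSeries.coeff_derivative, PowerSeries.coeff_mul, Finset.Nat.sum_antidiagonal_eq_sum_range_succ_mk]
  simp only [gen, lgen, PowerSeries.coeff_mk]
  rw [mul_comm, Eseq_succ]

lemma gen_add (a b : ℕ → R) : gen (fun k => a k + b k) = gen a * gen b := by
  apply ode_unique (gen_deriv _)
  · rw [Derivation.leibniz, gen_deriv, gen_deriv]
    have : lgen (fun k => a k + b k) = lgen a + lgen b := by
      ext1 n; simp [lgen, add_mul]
    rw [this]; simp only [smul_eq_mul]; ring
  · simp [gen, Eseq_zero, PowerSeries.coeff_mul]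

lemma Eseq_pow_mul (c : R) (a : ℕ → R) (n : ℕ) : Eseq (fun k => c ^ k * a k) n = C (c ^ n) * Eseq a n := by
  induction n using Nat.strong_induction_on with
  | _ n ih =>
    cases n with
    | zero => simp [Eseq_zero]
    | succ n =>
      apply rat_cancel (n := n)
      rw [Eseq_succ, mul_left_comm, Eseq_succ, Finset.mul_sum]
      apply Finset.sum_congr rfl
      intro i hi
      rw [ih _ (by have := Finset.mem_range.1 hi; omega)]
      have : (C (c ^ (n+1)) : SymFn R) = C (c ^ (i+1)) * C (c ^ (n - i)) := by
        rw [← C_mul, ← pow_add]; congr 2; have := Finset.mem_range.1 hi; omega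
      rw [this, C_mul]
      ring

/-- complete homogeneous functions over a general ring -/
def hh (n : ℕ) : SymFn R := Eseq (fun _ => 1) n
/-- coefficients of the inverse kernel -/
def Rq (q : R) (n : ℕ) : SymFn R := Eseq (fun k => -(1 - q ^ k)) n

lemma hh_zero : hh (R := R) 0 = 1 := Eseq_zero _
lemma Rq_zero (q : R) : Rq q 0 = 1 := Eseq_zero _

lemma Rq_hh (q : R) (n : ℕ) : ∑ c ∈ Finset.range (n+1), Rq q c * hh (n - c) = C (q ^ n) * hh n := by
  have h : gen (fun k => -(1 - q^k) + 1) = gen (fun k => -(1 - q ^ k)) * gen (fun _ => (1:R)) := gen_add _ _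
  have h2 := congrArg (PowerSeries.coeff n) h
  rw [PowerSeries.coeff_mul, Finset.Nat.sum_antidiagonal_eq_sum_range_succ_mk] at h2
  simp only [gen, PowerSeries.coeff_mk] at h2
  have h3 : (fun k => -(1 - q^k) + 1) = fun k => q ^ k * 1 := by ext k; ring
  rw [h3, Eseq_pow_mul] at h2
  exact h2.symm

lemma map_Eseq {R' : Type} [CommRing R'] [Algebra ℚ R'] (f : R →+* R') (a : ℕ → R) (n : ℕ) :
    MvPolynomial.map f (Eseq a n) = Eseq (fun k => f (a k)) n := by
  induction n using Nat.strong_induction_on with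
  | _ n ih =>
    cases n with
    | zero => simp [Eseq_zero]
    | succ n =>
      apply rat_cancel (n := n)
      have := congrArg (MvPolynomial.map f) (Eseq_succ a n)
      rw [map_mul, map_add, map_natCast, map_one] at this
      rw [this, Eseq_succ, map_sum]
      apply Finset.sum_congr rfl
      intro i hi
      rw [map_mul, ih _ (by have := Finset.mem_range.1 hi; omega)]
      simp

lemma map_hh {R' : Type} [CommRing R'] [Algebra ℚ R'] (f : R →+* R') (n : ℕ) :
    MvPolynomial.map f (hh n) = hh n := by
  rw [hh, map_Eseq]; simp [hh]

lemma map_Rq {R' : Type} [CommRing R'] [Algebra ℚ R'] (f : R →+* R') (q : R) (n : ℕ) :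
    MvPolynomial.map f (Rq q n) = Rq (f q) n := by
  rw [Rq, map_Eseq]; simp [Rq]

lemma hsym_eq_hh {R : Type} [Field R] [CharZero R] (n : ℕ) : hsym (R := R) n = hh n := by
  induction n using Nat.strong_induction_on with
  | _ n ih =>
    cases n with
    | zero => rw [hsym, hh_zero]
    | succ n =>
      apply rat_cancel (n := n)
      rw [hh, Eseq_succ, hsym]
      have h1 : ((n : SymFn R) + 1) = algebraMap R (SymFn R) ((n:R)+1) := by simp
      rw [h1, ← Algebra.smul_def, smul_smul, mul_inv_cancel₀ (Nat.cast_add_one_ne_zero n), one_smul]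
      apply Finset.sum_congr rfl
      intro i hi
      rw [ih _ (by have := Finset.mem_range.1 hi; omega)]
      simp only [hh, map_one, one_mul]; rfl

/-! the translation operator -/
abbrev LY (R : Type) [CommRing R] : Type := Polynomial (SymFn R)

def Tr (s : R) : SymFn R →ₐ[R] LY R :=
  aeval fun k : ℕ+ => Polynomial.C (X k) + Polynomial.C (C (1 - s ^ (k:ℕ))) * Polynomial.X ^ (k:ℕ)

lemma Tr_X (s : R) (k : ℕ+) : Tr s (X k) = 
    Polynomial.C (X k) + Polynomial.C (C (1 - s ^ (k:ℕ))) * Polynomial.X ^ (k:ℕ) := by simp [Tr]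
lemma Tr_C (s : R) (c : R) : Tr s (C c) = Polynomial.C (C c) := by
  rw [← MvPolynomial.algebraMap_eq, AlgHom.commutes]; rfl

section
variable (s : R)
local notation "yy" => (Polynomial.X : LY R)
local notation "ss" => (Polynomial.C (C s) : LY R)

/-- Geometric series. -/
def geo {S : Type} [CommRing S] (a : S) : PowerSeries S := PowerSeries.mk fun n => a ^ (n+1)

lemma geo_mul {S : Type} [CommRing S] (a : S) : (1 - PowerSeries.C a * PowerSeries.X) * geo a = PowerSeries.C a := by
  ext n
  cases n with
  | zero => simp [geo, sub_mul, mul_assoc]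
  | succ n => 
    rw [sub_mul, one_mul, mul_assoc, map_sub, PowerSeries.coeff_C_mul, PowerSeries.coeff_succ_X_mul]
    simp [geo, pow_succ, PowerSeries.coeff_C]; ring

lemma geo_ode {S : Type} [CommRing S] [Algebra ℚ S] {y z : S} {A B LA LB : PowerSeries S}
    (hA : PowerSeries.derivative S A = LA * A) (hB : PowerSeries.derivative S B = LB * B)
    (h : LA = LB + geo y - geo z) (h0 : PowerSeries.coeff 0 A = PowerSeries.coeff 0 B) :
    (1 - PowerSeries.C y * PowerSeries.X) * A = (1 - PowerSeries.C z * PowerSeries.X) * B := by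
  have hd : ∀ a : S, PowerSeries.derivative _ (1 - PowerSeries.C a * PowerSeries.X) = - PowerSeries.C a := by
    intro a
    rw [map_sub, Derivation.leibniz]
    simp [PowerSeries.derivative_C]
  apply ode_unique (L := LB - geo z)
  · rw [Derivation.leibniz, hd, hA, h]
    simp only [smul_eq_mul]
    linear_combination A * geo_mul y
  · rw [Derivation.leibniz, hd, hB]
    simp only [smul_eq_mul]
    linear_combination B * geo_mul z
  · simp only [PowerSeries.coeff_zero_eq_constantCoeff] at h0
    simp [sub_mul, mul_assoc, h0]

lemma Tr_gen : (1 - PowerSeries.C yy * PowerSeries.X) * PowerSeries.map (Tr s : SymFn R →+* LY R) (gen fun _ => 1)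
   = (1 - PowerSeries.C (ss * yy) * PowerSeries.X) * PowerSeries.map Polynomial.C (gen fun _ => 1) := by
  have hT : PowerSeries.map (Tr s : SymFn R →+* LY R) (lgen fun _ => 1) 
      = PowerSeries.map Polynomial.C (lgen fun _ => 1) + geo yy - geo (ss * yy) := by
    ext1 n
    simp [lgen, geo, Tr_X, mul_pow]; ring
  refine geo_ode (LA := PowerSeries.map (Tr s : SymFn R →+* LY R) (lgen fun _ => 1)) 
    (LB := PowerSeries.map Polynomial.C (lgen fun _ => 1)) ?_ ?_ hT ?_
  · rw [derivative_map, gen_deriv, map_mul]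
  · rw [derivative_map, gen_deriv, map_mul]
  · simp only [PowerSeries.coeff_map, gen, PowerSeries.coeff_mk, Eseq_zero, map_one]

lemma Tr_hh_rec (n : ℕ) : Tr s (hh (n+1)) - yy * Tr s (hh n) 
    = Polynomial.C (hh (n+1)) - ss * yy * Polynomial.C (hh n) := by
  have := congrArg (PowerSeries.coeff (n+1)) (Tr_gen s)
  rw [sub_mul, sub_mul, one_mul, one_mul, mul_assoc, mul_assoc, map_sub, map_sub, PowerSeries.coeff_C_mul,
    PowerSeries.coeff_C_mul, PowerSeries.coeff_succ_X_mul, PowerSeries.coeff_succ_X_mul] at this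
  simpa [gen, hh] using this

lemma Tr_hh (n : ℕ) : Tr s (hh n) = Polynomial.C (hh n) + (1 - ss) *
    ∑ j ∈ Finset.range n, yy ^ (j+1) * Polynomial.C (hh (n - 1 - j)) := by
  induction n with
  | zero => simp [hh_zero]
  | succ n ih =>
    have := Tr_hh_rec s n
    rw [sub_eq_iff_eq_add] at this
    rw [this, ih, Finset.sum_range_succ']
    have h2 : ∀ j, n + 1 - 1 - (j+1) = n - 1 - j := fun j => by omega
    simp only [h2, pow_succ _ (_ + 1)]
    simp only [mul_comm _ yy, mul_assoc, ← Finset.mul_sum]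
    simp; ring
end

/-- `L`: y^j ↦ R_j -/
def Lop (q : R) : LY R →ₗ[SymFn R] SymFn R :=
  Polynomial.lsum fun j => LinearMap.mulRight (SymFn R) (Rq q j)

lemma Lop_monomial (q : R) (j : ℕ) (c : SymFn R) : Lop q (Polynomial.monomial j c) = c * Rq q j := by
  simp [Lop]

lemma Lop_C_mul (q : R) (c : SymFn R) (p : LY R) : Lop q (Polynomial.C c * p) = c * Lop q p := by
  rw [← Polynomial.smul_eq_C_mul, map_smul, smul_eq_mul]

/-- the operator D -/
def Dop (q s : R) : SymFn R →ₗ[R] SymFn R :=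
  ((Lop q).restrictScalars R).comp (Tr s).toLinearMap

lemma Dop_apply (q s : R) (f : SymFn R) : Dop q s f = Lop q (Tr s f) := rfl

lemma Lop_Tr_hh (q s : R) (n : ℕ) (p : LY R) : Lop q (Tr s (hh n) * p) =
    C s * hh n * Lop q p + (1 - C s) * p.sum (fun i c => c * (C (q ^ (n+i)) * hh (n+i) - 
      ∑ j ∈ Finset.range i, Rq q j * hh (n + i - j))) := by
  induction p using Polynomial.induction_on' with
  | add p r hp hr =>
    rw [mul_add, map_add, hp, hr, map_add, Polynomial.sum_add_index]
    · ring
    · simp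
    · intros; ring
  | monomial i c =>
    rw [Polynomial.sum_monomial_index _ _ (by simp), Lop_monomial, Tr_hh]
    have h1 : Polynomial.C (hh n) * Polynomial.monomial i c = Polynomial.monomial i (hh (R := R) n * c) := by
      simp
    have h2 : ∀ j, (Polynomial.X ^ (j+1) * Polynomial.C (hh (n-1-j))) * Polynomial.monomial i c
       = Polynomial.monomial (i + (j + 1)) (hh (R := R) (n-1-j) * c) := by
      intro j
      rw [mul_assoc, Polynomial.C_mul_monomial, Polynomial.X_pow_mul_monomial]
    have h3 : (1 - Polynomial.C (C s) : LY R) = Polynomial.C (1 - C s) := by simp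
    rw [add_mul, h1, h3, mul_assoc, Finset.sum_mul, map_add, Lop_C_mul, map_sum]
    simp only [h2, Lop_monomial]
    have h4 := Rq_hh q (n+i)
    rw [show n + i + 1 = i + 1 + n by ring, Finset.sum_range_add, Finset.sum_range_succ] at h4
    rw [← h4]
    have h5 : ∑ x ∈ Finset.range n, hh (n - 1 - x) * c * Rq q (i + (x + 1)) = 
       c * ∑ x ∈ Finset.range n, Rq q (i + 1 + x) * hh (n + i - (i+1+x)) := by
      rw [Finset.mul_sum]
      apply Finset.sum_congr rfl
      intro x hx
      rw [show n + i - (i+1+x) = n - 1 - x by omega, show i + 1 + x = i + (x + 1) by ring]; ring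
    rw [h5, Nat.add_sub_cancel]
    ring

end MacAux
end MacAuxSec2

open MvPolynomial
noncomputable section MacAuxSec3
namespace MacAux
set_option linter.unusedSectionVars false
variable {R : Type} [CommRing R] [Algebra ℚ R]

/-- generic `h_μ` -/
def hP (μ : Multiset ℕ+) : SymFn R := (μ.map fun a => hh (R := R) (a : ℕ)).prod

lemma hP_zero : hP (R := R) 0 = 1 := by simp [hP]
lemma hP_cons (n : ℕ+) (μ : Multiset ℕ+) : hP (R := R) (n ::ₘ μ) = hh (n:ℕ) * hP μ := by simp [hP]
lemma hP_add (ν μ : Multiset ℕ+) : hP (R := R) (ν + μ) = hP ν * hP μ := by simp [hP]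
lemma hP_nsmul (k : ℕ) (μ : Multiset ℕ+) : hP (R := R) (k • μ) = hP μ ^ k := by
  simp [hP, Multiset.map_nsmul, Multiset.prod_nsmul]
lemma map_hP {R' : Type} [CommRing R'] [Algebra ℚ R'] (f : R →+* R') (μ : Multiset ℕ+) :
    MvPolynomial.map f (hP μ) = hP μ := by
  simp [hP, map_multiset_prod, Multiset.map_map, map_hh]

lemma hPar_eq_hP {R : Type} [Field R] [CharZero R] (μ : Multiset ℕ+) : hPar (R := R) μ = hP μ := by
  simp [hPar, hP, hsym_eq_hh]

/-- weight spaces -/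
def V (z : ℤ) : Submodule R (SymFn R) := Submodule.span R (hP '' {ν | (wt ν : ℤ) = z})
/-- span of the larger `h_ν` -/
def Up (μ : Multiset ℕ+) : Submodule R (SymFn R) :=
  Submodule.span R (hP '' {ν | key μ < key ν ∧ wt ν = wt μ})

lemma hP_mem_V {ν : Multiset ℕ+} {z : ℤ} (h : (wt ν : ℤ) = z) : hP (R := R) ν ∈ V z :=
  Submodule.subset_span ⟨ν, h, rfl⟩
lemma hP_mem_Up {ν μ : Multiset ℕ+} (h : key μ < key ν) (h2 : wt ν = wt μ) : hP (R := R) ν ∈ Up μ :=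
  Submodule.subset_span ⟨ν, ⟨h, h2⟩, rfl⟩

lemma Up_le_V {μ : Multiset ℕ+} {z : ℤ} (h : (wt μ : ℤ) = z) : Up (R := R) μ ≤ V z := by
  apply Submodule.span_mono
  apply Set.image_mono
  rintro ν ⟨_, h2⟩
  simp [h2, h]

lemma one_mem_V : (1 : SymFn R) ∈ V 0 := by
  rw [← hP_zero]; exact hP_mem_V (by simp [wt_zero])

lemma hh_mem_V (n : ℕ) : hh (R := R) n ∈ V n := by
  cases n with
  | zero => rw [hh_zero]; exact one_mem_V
  | succ n =>
    have := hP_mem_V (R := R) (ν := {Nat.succPNat n}) (z := ((n+1:ℕ):ℤ)) (by simp [wt_singleton])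
    simpa [hP] using this

lemma V_mul {a b c : ℤ} {f g : SymFn R} (hf : f ∈ V a) (hg : g ∈ V b) (h : a + b = c) : f * g ∈ V c := by
  have := Submodule.mul_mem_mul hf hg
  rw [V, V, Submodule.span_mul_span] at this
  refine Submodule.span_mono ?_ this
  rintro _ ⟨_, ⟨ν, hν, rfl⟩, _, ⟨μ, hμ, rfl⟩, rfl⟩
  refine ⟨ν + μ, ?_, hP_add _ _⟩
  simp only [Set.mem_ofPred_eq] at *
  rw [wt_add]; push_cast; omega

lemma C_mul_mem {W : Submodule R (SymFn R)} {f : SymFn R} (c : R) (h : f ∈ W) : C c * f ∈ W := by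
  rw [← MvPolynomial.smul_eq_C_mul]; exact W.smul_mem _ h

lemma X_mem_V (n : ℕ) : (X (Nat.succPNat n) : SymFn R) ∈ V ((n:ℤ)+1) := by
  induction n using Nat.strong_induction_on with
  | _ n ih =>
    have h := Eseq_succ (fun _ => (1:R)) n
    rw [Finset.sum_range_succ, ← sub_eq_iff_eq_add'] at h
    simp only [map_one, one_mul, Nat.sub_self, Eseq_zero, mul_one] at h
    rw [← h]
    apply Submodule.sub_mem
    · have : ((n : SymFn R) + 1) = C ((n:R)+1) := by simp
      rw [this]
      apply C_mul_mem
      exact_mod_cast hh_mem_V (n+1)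
    · apply Submodule.sum_mem
      intro i hi
      have hi := Finset.mem_range.1 hi
      refine V_mul (ih i hi) (hh_mem_V (n - i)) ?_
      push_cast [Nat.cast_sub hi.le]; ring

lemma Eseq_mem_V (a : ℕ → R) (n : ℕ) : Eseq a n ∈ V (n:ℤ) := by
  induction n using Nat.strong_induction_on with
  | _ n ih =>
    cases n with
    | zero => rw [Eseq_zero]; exact one_mem_V
    | succ n =>
      rw [Eseq, ← algebraMap_smul R]
      apply Submodule.smul_mem
      apply Submodule.sum_mem
      intro i hi
      have hi := Finset.mem_range.1 hi
      rw [mul_assoc]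
      apply C_mul_mem
      refine V_mul (X_mem_V i) (ih (n - i) (by omega)) ?_
      push_cast [Nat.cast_sub (Nat.lt_succ_iff.1 hi)]; ring

lemma Rq_mem_V (q : R) (n : ℕ) : Rq q n ∈ V (n:ℤ) := Eseq_mem_V _ n

lemma hP_span : Submodule.span R (Set.range (hP (R := R))) = ⊤ := by
  rw [eq_top_iff]
  have hV : ∀ z, V (R := R) z ≤ Submodule.span R (Set.range (hP (R := R))) := fun z => 
    Submodule.span_mono (Set.image_subset_range _ _)
  intro f _
  induction f using MvPolynomial.induction_on with
  | C c => 
    rw [← mul_one (C c)]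
    exact C_mul_mem _ (hV 0 one_mem_V)
  | add f g hf hg => exact Submodule.add_mem _ (hf trivial) (hg trivial)
  | mul_X f k hf =>
    have hk : (X k : SymFn R) ∈ Submodule.span R (Set.range (hP (R := R))) := by
      have := X_mem_V (R := R) (PNat.natPred k)
      rw [PNat.succPNat_natPred] at this
      exact hV _ this
    have := Submodule.mul_mem_mul (hf trivial) hk
    rw [Submodule.span_mul_span] at this
    refine Submodule.span_mono ?_ this
    rintro _ ⟨_, ⟨ν, rfl⟩, _, ⟨μ, rfl⟩, rfl⟩
    exact ⟨ν + μ, hP_add _ _⟩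

/-! grading of the translation operator -/
def Gr (z : ℤ) (p : LY R) : Prop := ∀ j : ℕ, p.coeff j ∈ V (z - j)

lemma Gr_mul {a b c : ℤ} {p r : LY R} (hp : Gr a p) (hr : Gr b r) (h : a + b = c) : Gr c (p * r) := by
  intro j
  rw [Polynomial.coeff_mul]
  apply Submodule.sum_mem
  intro x hx
  have := Finset.HasAntidiagonal.mem_antidiagonal.1 hx
  exact V_mul (hp _) (hr _) (by rw [← this, ← h]; push_cast; ring)
lemma Gr_add {a : ℤ} {p r : LY R} (hp : Gr a p) (hr : Gr a r) : Gr a (p + r) := by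
  intro j; rw [Polynomial.coeff_add]; exact Submodule.add_mem _ (hp j) (hr j)
lemma Gr_sub {a : ℤ} {p r : LY R} (hp : Gr a p) (hr : Gr a r) : Gr a (p - r) := by
  intro j; rw [Polynomial.coeff_sub]; exact Submodule.sub_mem _ (hp j) (hr j)
lemma Gr_C {a : ℤ} {f : SymFn R} (hf : f ∈ V a) : Gr a (Polynomial.C f) := by
  intro j; rw [Polynomial.coeff_C]; split_ifs with h
  · subst h; simpa using hf
  · exact Submodule.zero_mem _
lemma Gr_X : Gr 1 (Polynomial.X : LY R) := by
  intro j; rw [Polynomial.coeff_X]; split_ifs with h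
  · subst h; simpa using one_mem_V
  · exact Submodule.zero_mem _

lemma Gr_Tr_hh (s : R) (n : ℕ) : Gr (n:ℤ) (Tr s (hh n)) := by
  induction n with
  | zero => rw [hh_zero, map_one, ← map_one Polynomial.C]; exact Gr_C one_mem_V
  | succ n ih =>
    have := Tr_hh_rec s n
    rw [sub_eq_iff_eq_add] at this
    rw [this]
    refine Gr_add (Gr_sub (Gr_C (hh_mem_V _)) ?_) (Gr_mul Gr_X ih (by push_cast; ring))
    rw [mul_comm (Polynomial.C (C s)), mul_assoc, ← map_mul]
    exact Gr_mul Gr_X (Gr_C (C_mul_mem _ (hh_mem_V n))) (by push_cast; ring)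

lemma Gr_Tr_hP (s : R) (μ : Multiset ℕ+) : Gr (wt μ:ℤ) (Tr s (hP μ)) := by
  induction μ using Multiset.induction with
  | empty => rw [hP_zero, map_one, ← map_one Polynomial.C]; exact Gr_C one_mem_V
  | cons n μ ih =>
    rw [hP_cons, map_mul]
    exact Gr_mul (Gr_Tr_hh _ _) ih (by rw [wt_cons]; push_cast; ring)

lemma Tr_coeff_zero (s : R) (f : SymFn R) : (Tr s f).coeff 0 = f := by
  have : (Polynomial.constantCoeff : LY R →+* SymFn R).comp (Tr s : SymFn R →+* LY R) = RingHom.id _ := by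
    apply MvPolynomial.ringHom_ext
    · intro c; simp [Tr_C]
    · intro k
      have : (0:ℕ) ≠ (k:ℕ) := k.pos.ne
      simp [Tr_X, this]
  exact DFunLike.congr_fun this f

lemma mul_mem_Up {n k : ℕ} {n' : ℕ+} {μ : Multiset ℕ+} (hn : n = n') (hμ : ∀ a ∈ μ, a ≤ n') (hk : 0 < k) {z : ℤ}
    {f : SymFn R} (hf : f ∈ V z) (hz : z + k = wt μ) : f * hh (n + k) ∈ Up (n' ::ₘ μ) := by
  subst hn
  lift k to ℕ+ using hk
  replace hf : f ∈ Submodule.span R (hP '' {ν | (wt ν : ℤ) = z}) := hf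
  induction hf using Submodule.span_induction with
  | mem x hx =>
    obtain ⟨ν, hν, rfl⟩ := hx
    have : hP (R := R) ν * hh (n' + k) = hP ((n' + k) ::ₘ ν) := by
      rw [hP_cons, mul_comm, PNat.add_coe]
    rw [this]
    have hlt : n' < n' + k := PNat.lt_add_right _ _
    apply hP_mem_Up
    · refine key_lt_of_mem (k := n' + k) ?_ (by simp)
      intro a ha
      rcases Multiset.mem_cons.1 ha with rfl | ha
      · exact hlt
      · exact lt_of_le_of_lt (hμ a ha) hlt
    · simp only [Set.mem_ofPred_eq] at hν
      have hz' : wt ν + k = wt μ := by omega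
      rw [wt_cons, wt_cons, ← hz']
      simp; ring
  | zero => simp
  | add x y _ _ hx hy => rw [add_mul]; exact Submodule.add_mem _ hx hy
  | smul a x _ hx => rw [smul_mul_assoc]; exact Submodule.smul_mem _ _ hx

lemma hP_mul_Up {μ : Multiset ℕ+} (ν : Multiset ℕ+) {f : SymFn R} (hf : f ∈ Up μ) : hP ν * f ∈ Up (ν + μ) := by
  replace hf : f ∈ Submodule.span R (hP '' {ν | key μ < key ν ∧ wt ν = wt μ}) := hf
  induction hf using Submodule.span_induction with
  | mem x hx =>
    obtain ⟨ρ, ⟨h1, h2⟩, rfl⟩ := hx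
    rw [← hP_add]
    exact hP_mem_Up (key_add_lt_left _ h1) (by rw [wt_add, wt_add, h2])
  | zero => simp
  | add x y _ _ hx hy => rw [mul_add]; exact Submodule.add_mem _ hx hy
  | smul a x _ hx => rw [mul_smul_comm]; exact Submodule.smul_mem _ _ hx

/-- Triangularity of `D`. -/
lemma Dop_hP (q s : R) (μ : Multiset ℕ+) : Dop q s (hP μ) - C (eig q s μ) * hP μ ∈ Up μ := by
  induction μ using maxInd with
  | h0 => 
    have : Dop q s (hP 0) - C (eig q s 0) * hP 0 = 0 := by
      rw [hP_zero, eig_zero, Dop_apply, map_one, ← Polynomial.C_1, ← Polynomial.monomial_zero_left, Lop_monomial, Rq_zero]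
      simp
    rw [this]; exact Submodule.zero_mem _
  | h1 n μ hn ih =>
    have hT := Gr_Tr_hP s μ
    rw [hP_cons, Dop_apply, map_mul, Lop_Tr_hh, eig_cons _ _ hn, ← Dop_apply, Polynomial.sum_over_range _ (by simp),
      Finset.sum_range_succ', Tr_coeff_zero]
    have e : C s * hh (n:ℕ) * Dop q s (hP μ) + (1 - C s) * (∑ k ∈ Finset.range (Tr s (hP μ)).natDegree, 
        (Tr s (hP μ)).coeff (k+1) * (C (q ^ ((n:ℕ) + (k+1))) * hh ((n:ℕ) + (k+1)) - 
          ∑ j ∈ Finset.range (k+1), Rq q j * hh ((n:ℕ) + (k+1) - j))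
       + hP μ * (C (q ^ ((n:ℕ) + 0)) * hh ((n:ℕ) + 0) - ∑ j ∈ Finset.range 0, Rq q j * hh ((n:ℕ) + 0 - j)))
       - C (s * eig q s μ + (1 - s) * q ^ (n:ℕ)) * (hh (n:ℕ) * hP μ) 
      = C s * (hP {n} * (Dop q s (hP μ) - C (eig q s μ) * hP μ)) + C (1 - s) * (∑ k ∈ Finset.range (Tr s (hP μ)).natDegree, 
        (Tr s (hP μ)).coeff (k+1) * (C (q ^ ((n:ℕ) + (k+1))) * hh ((n:ℕ) + (k+1)) - 
          ∑ j ∈ Finset.range (k+1), Rq q j * hh ((n:ℕ) + (k+1) - j))) := by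
      have : hP {n} = hh (R := R) (n:ℕ) := by simp [hP]
      rw [this]
      simp only [map_add, map_mul, map_sub, map_one, add_zero, Finset.range_zero, Finset.sum_empty, sub_zero]
      ring
    rw [e]
    apply Submodule.add_mem
    · apply C_mul_mem
      rw [← Multiset.singleton_add]
      exact hP_mul_Up _ ih
    · apply C_mul_mem
      apply Submodule.sum_mem
      intro k _
      rw [mul_sub]
      apply Submodule.sub_mem
      · rw [mul_left_comm]
        apply C_mul_mem
        exact mul_mem_Up rfl hn (Nat.succ_pos k) (hT (k+1)) (by push_cast; ring)
      · rw [Finset.mul_sum]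
        apply Submodule.sum_mem
        intro j hj
        have hj := Finset.mem_range.1 hj
        rw [← mul_assoc, show (n:ℕ) + (k+1) - j = n + (k + 1 - j) by omega]
        refine mul_mem_Up rfl hn (by omega) (V_mul (hT (k+1)) (Rq_mem_V q j) rfl) ?_
        push_cast [Nat.cast_sub hj.le]; ring

/-! functoriality -/
section Functorial
variable {R' : Type} [CommRing R'] [Algebra ℚ R'] (f : R →+* R')

lemma Tr_map (s : R) (x : SymFn R) : (Tr s x).map (MvPolynomial.map f) = Tr (f s) (MvPolynomial.map f x) := by
  induction x using MvPolynomial.induction_on with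
  | C c => simp [Tr_C]
  | add x y hx hy => simp [hx, hy]
  | mul_X x k hx => simp [hx, Tr_X]

lemma Lop_map (q : R) (p : LY R) : MvPolynomial.map f (Lop q p) = Lop (f q) (p.map (MvPolynomial.map f)) := by
  induction p using Polynomial.induction_on' with
  | add p r hp hr => simp [hp, hr]
  | monomial i c => simp [Lop_monomial, map_Rq]

lemma Dop_map (q s : R) (x : SymFn R) : MvPolynomial.map f (Dop q s x) = Dop (f q) (f s) (MvPolynomial.map f x) := by
  rw [Dop_apply, Lop_map, Tr_map, ← Dop_apply]
end Functorial

end MacAux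
end MacAuxSec3

open MvPolynomial
noncomputable section MacAuxSec4
namespace MacAux
set_option linter.unusedSectionVars false
variable {R : Type} [Field R]

def wc (c : ℕ+ → R) (m : ℕ+ →₀ ℕ) : R :=
  ∏ k ∈ m.support, ((Nat.factorial (m k) : R) * ((k : ℕ) : R) ^ (m k) * (c k) ^ (m k))

def ip (c : ℕ+ → R) (f g : SymFn R) : R :=
  ∑ m ∈ f.support, MvPolynomial.coeff m f * MvPolynomial.coeff m g * wc c m

lemma innerQT_eq (q t : R) (f g : SymFn R) :
    innerQT q t f g = ip (fun k => (1 - q ^ (k:ℕ)) / (1 - t ^ (k:ℕ))) f g := rfl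
lemma innerH_eq (f g : SymFn R) : innerH f g = ip (fun _ => 1) f g := by
  simp [innerH, ip, zwtH, wc]

lemma ip_eq_sum (c : ℕ+ → R) (f g : SymFn R) {S : Finset (ℕ+ →₀ ℕ)} (h : f.support ⊆ S) :
    ip c f g = ∑ m ∈ S, MvPolynomial.coeff m f * MvPolynomial.coeff m g * wc c m := by
  apply Finset.sum_subset h
  intro m _ hm
  rw [MvPolynomial.notMem_support_iff] at hm
  simp [hm]

lemma ip_comm (c : ℕ+ → R) (f g : SymFn R) : ip c f g = ip c g f := by
  classical
  rw [ip_eq_sum c f g Finset.subset_union_left, ip_eq_sum c g f (Finset.subset_union_right (s₁ := f.support))]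
  apply Finset.sum_congr rfl
  intros; ring

lemma ip_add_left (c : ℕ+ → R) (f f' g : SymFn R) : ip c (f + f') g = ip c f g + ip c f' g := by
  classical
  rw [ip_eq_sum c (f + f') g MvPolynomial.support_add, ip_eq_sum c f g Finset.subset_union_left, 
   ip_eq_sum c f' g (Finset.subset_union_right (s₁ := f.support)), ← Finset.sum_add_distrib]
  apply Finset.sum_congr rfl
  intros; rw [coeff_add]; ring

lemma ip_smul_left (c : ℕ+ → R) (a : R) (f g : SymFn R) : ip c (a • f) g = a * ip c f g := by
  rw [ip_eq_sum c (a • f) g MvPolynomial.support_smul, ip, Finset.mul_sum]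
  apply Finset.sum_congr rfl
  intros; rw [coeff_smul, smul_eq_mul]; ring

/-- the bilinear form -/
def ipL (c : ℕ+ → R) : SymFn R →ₗ[R] SymFn R →ₗ[R] R :=
  LinearMap.mk₂ R (ip c) (ip_add_left c) (ip_smul_left c)
    (fun f g g' => by rw [ip_comm, ip_add_left, ip_comm c g, ip_comm c g'])
    (fun a f g => by rw [ip_comm, ip_smul_left, ip_comm, smul_eq_mul])

lemma ipL_apply (c : ℕ+ → R) (f g : SymFn R) : ipL c f g = ip c f g := rfl
lemma ipL_comm (c : ℕ+ → R) (f g : SymFn R) : ipL c f g = ipL c g f := ip_comm c f g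

lemma ipL_monomial (c : ℕ+ → R) (m : ℕ+ →₀ ℕ) (a : R) (g : SymFn R) :
    ipL c (monomial m a) g = a * coeff m g * wc c m := by
  rw [ipL_apply, ip_eq_sum c _ g MvPolynomial.support_monomial_subset]
  simp

lemma wc_eq_prod (c : ℕ+ → R) {m : ℕ+ →₀ ℕ} {S : Finset ℕ+} (h : m.support ⊆ S) :
    wc c m = ∏ k ∈ S, ((Nat.factorial (m k) : R) * ((k : ℕ) : R) ^ (m k) * (c k) ^ (m k)) := by
  apply Finset.prod_subset h
  intro k _ hk
  rw [Finsupp.notMem_support_iff] at hk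
  simp [hk]

lemma wc_add_single (c : ℕ+ → R) (m : ℕ+ →₀ ℕ) (k : ℕ+) :
    wc c (m + Finsupp.single k 1) = ((m k : R) + 1) * ((k:ℕ) : R) * c k * wc c m := by
  classical
  have h1 : m.support ⊆ insert k m.support := Finset.subset_insert _ _
  have h2 : (m + Finsupp.single k 1).support ⊆ insert k m.support := by
    refine Finsupp.support_add.trans ?_
    intro x hx
    rcases Finset.mem_union.1 hx with h | h
    · exact h1 h
    · have := Finsupp.support_single_subset h
      rw [Finset.mem_singleton] at this
      simp [this]
  have hk : k ∈ insert k m.support := Finset.mem_insert_self _ _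
  rw [wc_eq_prod c h1, wc_eq_prod c h2, ← Finset.mul_prod_erase _ _ hk, ← Finset.mul_prod_erase _ _ hk]
  have : ∀ x ∈ (insert k m.support).erase k, (m + Finsupp.single k 1 : ℕ+ →₀ ℕ) x = m x := by
    intro x hx
    have := Finset.ne_of_mem_erase hx
    simp [this.symm]
  rw [Finset.prod_congr rfl (fun x hx => by rw [this x hx])]
  simp only [Finsupp.add_apply, Finsupp.single_eq_same, Nat.factorial_succ, pow_succ]
  push_cast
  ring

lemma ipL_X_mul (c : ℕ+ → R) (k : ℕ+) (f g : SymFn R) :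
    ipL c (X k * f) g = ((k:ℕ) : R) * c k * ipL c f (pderiv k g) := by
  induction f using MvPolynomial.induction_on' with
  | add f f' hf hf' => simp only [mul_add, map_add, LinearMap.add_apply, hf, hf']
  | monomial m a =>
    have : (X k * monomial m a : SymFn R) = monomial (m + Finsupp.single k 1) a := by
      rw [X, monomial_mul, one_mul, add_comm]
    rw [this, ipL_monomial, ipL_monomial, coeff_pderiv, wc_add_single]
    ring

lemma deriv_aux {S : Type} [CommRing S] (a b : S) (d : ℕ) : 
    Polynomial.derivative (Polynomial.C a + Polynomial.C b * Polynomial.X ^ (d+1)) 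
     = Polynomial.C (((d:S)+1) * b) * Polynomial.X ^ d := by
  rw [Polynomial.derivative_add, Polynomial.derivative_C, Polynomial.derivative_C_mul, 
    Polynomial.derivative_X_pow, zero_add, Nat.add_sub_cancel, ← mul_assoc, ← Polynomial.C_mul]
  push_cast
  rw [mul_comm b]

/-- chain rule for the translation operator -/
lemma Tr_deriv {R : Type} [CommRing R] [Algebra ℚ R] (s : R) (g : SymFn R) : ∃ N0 : ℕ, ∀ N, N0 ≤ N → Polynomial.derivative (Tr s g) =
    ∑ i ∈ Finset.range N, Polynomial.C (C (((i:R)+1) * (1 - s ^ (i+1)))) * Polynomial.X ^ i 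
      * Tr s (pderiv (Nat.succPNat i) g) := by
  induction g using MvPolynomial.induction_on with
  | C c => 
    refine ⟨0, fun N _ => ?_⟩
    simp
  | add f g hf hg =>
    obtain ⟨a, ha⟩ := hf
    obtain ⟨b, hb⟩ := hg
    refine ⟨max a b, fun N hN => ?_⟩
    simp only [map_add, mul_add, Finset.sum_add_distrib]
    rw [ha N (le_trans (le_max_left _ _) hN), hb N (le_trans (le_max_right _ _) hN)]
  | mul_X g k hg =>
    obtain ⟨a, ha⟩ := hg
    refine ⟨max a k, fun N hN => ?_⟩
    have h1 := ha N (le_trans (le_max_left _ _) hN)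
    have hk : PNat.natPred k ∈ Finset.range N := by
      have : (k:ℕ) ≤ N := le_trans (le_max_right _ _) hN
      have := PNat.natPred_add_one k
      rw [Finset.mem_range]; omega
    have h2 : ∀ i, Tr s (pderiv (Nat.succPNat i) (g * X k)) = Tr s (X k) * Tr s (pderiv (Nat.succPNat i) g) 
      + if i = PNat.natPred k then Tr s g else 0 := by
      intro i
      rw [Derivation.leibniz, pderiv_X]
      split_ifs with h
      · subst h; simp [add_comm]
      · have : Nat.succPNat i ≠ k := by
          rintro rfl; simp at h
        simp [this]
    simp only [h2, mul_add, Finset.sum_add_distrib, mul_ite, mul_zero, Finset.sum_ite_eq', hk, if_true]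
    rw [map_mul, Polynomial.derivative_mul, h1, Finset.sum_mul]
    have e : (k:ℕ) = PNat.natPred k + 1 := (PNat.natPred_add_one k).symm
    have e2 : Polynomial.derivative (Tr s (X k)) = Polynomial.C (C (((PNat.natPred k : R)+1) * (1 - s ^ (PNat.natPred k+1)))) 
        * Polynomial.X ^ (PNat.natPred k) := by
      rw [Tr_X, e, deriv_aux, C_mul]
      simp only [map_add, map_one, map_natCast]
    rw [e2, mul_comm (Tr s g)]
    refine congrArg₂ (· + ·) ?_ rfl
    apply Finset.sum_congr rfl
    intro i _
    rw [mul_assoc, mul_assoc, mul_assoc, mul_comm (Tr s (X k))]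

lemma Tr_coeff_rec {R : Type} [CommRing R] [Algebra ℚ R] (s : R) (g : SymFn R) (m : ℕ) : ((m:SymFn R) + 1) * (Tr s g).coeff (m+1) = 
    ∑ i ∈ Finset.range (m+1), C (((i:R)+1) * (1 - s ^ (i+1))) * (Tr s (pderiv (Nat.succPNat i) g)).coeff (m - i) := by
  obtain ⟨N0, h⟩ := Tr_deriv s g
  have := congrArg (fun p => Polynomial.coeff p m) (h (max N0 (m+1)) (le_max_left _ _))
  simp only [Polynomial.coeff_derivative, Polynomial.finsetSum_coeff, mul_assoc] at this
  rw [mul_comm, this]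
  symm
  rw [← Finset.sum_subset (Finset.range_subset_range.2 (le_max_right N0 (m+1)))]
  · apply Finset.sum_congr rfl
    intro i hi
    have := Finset.mem_range.1 hi
    rw [Polynomial.coeff_C_mul, Polynomial.coeff_X_pow_mul', if_pos (by omega)]
  · intro i _ hi
    have := Finset.mem_range.not.1 hi
    rw [Polynomial.coeff_C_mul, Polynomial.coeff_X_pow_mul', if_neg (by omega), mul_zero]

lemma natCast_mul_eq (m : ℕ) (f : SymFn R) : ((m:SymFn R) + 1) * f = ((m:R)+1) • f := by
  rw [MvPolynomial.smul_eq_C_mul]; simp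

variable [CharZero R]

lemma ip_adjoint (c : ℕ+ → R) (a : ℕ → R) (θ s : R) 
    (h : ∀ i : ℕ, a (i+1) * c (Nat.succPNat i) = θ ^ (i+1) * (1 - s ^ (i+1)))
    (m : ℕ) (f g : SymFn R) : ipL c (Eseq a m * f) g = θ ^ m * ipL c f ((Tr s g).coeff m) := by
  induction m using Nat.strong_induction_on generalizing g with
  | _ m ih =>
    cases m with
    | zero => simp [Eseq_zero, Tr_coeff_zero]
    | succ m =>
      have h0 : ((m:R)+1) ≠ 0 := Nat.cast_add_one_ne_zero m
      apply mul_left_cancel₀ h0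
      have e1 : ((m:R)+1) * ipL c (Eseq a (m+1) * f) g = ipL c (((m : SymFn R) + 1) * Eseq a (m+1) * f) g := by
        rw [mul_assoc, natCast_mul_eq, map_smul, LinearMap.smul_apply, smul_eq_mul]
      have e2 : ((m:R)+1) * (θ ^ (m+1) * ipL c f ((Tr s g).coeff (m+1))) = 
          θ ^ (m+1) * ipL c f (((m : SymFn R) + 1) * (Tr s g).coeff (m+1)) := by
        rw [natCast_mul_eq, map_smul, smul_eq_mul]; ring
      rw [e1, e2, Eseq_succ, Tr_coeff_rec, Finset.sum_mul, map_sum, map_sum, LinearMap.sum_apply, Finset.mul_sum]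
      apply Finset.sum_congr rfl
      intro i hi
      have hi := Finset.mem_range.1 hi
      rw [mul_assoc, mul_assoc, ← MvPolynomial.smul_eq_C_mul, map_smul, LinearMap.smul_apply, ipL_X_mul,
        ih _ (by omega), ← MvPolynomial.smul_eq_C_mul, map_smul, smul_eq_mul, smul_eq_mul]
      have e3 : θ ^ (m+1) = θ ^ (i+1) * θ ^ (m-i) := by rw [← pow_add]; congr 1; omega
      rw [e3, Nat.succPNat_coe]
      push_cast
      linear_combination (((i:R)+1) * θ^(m-i) * (ipL c) f ((Tr s (pderiv (Nat.succPNat i) g)).coeff (m - i))) * h i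

lemma hall_adjoint (n : ℕ) (f g : SymFn R) : 
    ipL (fun _ => (1:R)) (hh n * f) g = ipL (fun _ => (1:R)) f ((Tr 0 g).coeff n) := by
  have := ip_adjoint (R := R) (fun _ => 1) (fun _ => 1) 1 0 (by simp) n f g
  rw [one_pow, one_mul] at this
  exact this

lemma Dop_sum (q s : R) (f : SymFn R) {N : ℕ} (hN : (Tr s f).natDegree < N) : 
    Dop q s f = ∑ m ∈ Finset.range N, Rq q m * (Tr s f).coeff m := by
  rw [Dop_apply]
  conv_lhs => rw [(Tr s f).as_sum_range' N hN]
  rw [map_sum]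
  apply Finset.sum_congr rfl
  intros; rw [Lop_monomial, mul_comm]

lemma Dop_selfadj (c : ℕ+ → R) (q θ s : R) 
    (h : ∀ i : ℕ, -(1 - q ^ (i+1)) * c (Nat.succPNat i) = θ ^ (i+1) * (1 - s ^ (i+1))) (f g : SymFn R) :
    ipL c (Dop q s f) g = ipL c f (Dop q s g) := by
  have key : ∀ f g : SymFn R, ∀ N, (Tr s f).natDegree < N → ipL c (Dop q s f) g = 
      ∑ m ∈ Finset.range N, θ ^ m * ipL c ((Tr s f).coeff m) ((Tr s g).coeff m) := by
    intro f g N hN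
    rw [Dop_sum q s f hN, map_sum, LinearMap.sum_apply]
    apply Finset.sum_congr rfl
    intro m _
    exact ip_adjoint c (fun k => -(1 - q ^ k)) θ s h m _ g
  rw [key f g (max (Tr s f).natDegree (Tr s g).natDegree + 1) (by omega), ipL_comm c f, 
    key g f (max (Tr s f).natDegree (Tr s g).natDegree + 1) (by omega)]
  apply Finset.sum_congr rfl
  intros; rw [ipL_comm]

/-! Schur functions -/
def JT (n : ℕ) (v : ℕ → ℕ) : SymFn R := Matrix.det (Matrix.of fun i j : Fin n =>
    hInt (R := R) (((v i : ℕ) : ℤ) + (j : ℤ) - (i : ℤ)))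

lemma schur_eq_JT (μ : Multiset ℕ+) : schur (R := R) μ = JT (Multiset.card μ) (fun i => (descParts μ).getD i 0) := rfl

lemma hInt_neg {z : ℤ} (h : z < 0) : hInt (R := R) z = 0 := by
  rw [hInt, if_neg (by omega)]
lemma hInt_nat (n : ℕ) : hInt (R := R) (n:ℤ) = hh n := by
  rw [hInt, if_pos (by omega), hsym_eq_hh]; simp

lemma Tr_hInt (z : ℤ) : Tr 0 (hInt (R := R) z) = Polynomial.C (hInt z) + Polynomial.X * Tr 0 (hInt (z-1)) := by
  rcases lt_trichotomy z 0 with h | h | h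
  · rw [hInt_neg h, hInt_neg (by omega)]; simp
  · subst h
    rw [hInt_neg (by omega : (0:ℤ) - 1 < 0)]
    have := hInt_nat (R := R) 0
    rw [Nat.cast_zero] at this
    rw [this, hh_zero]; simp
  · obtain ⟨n, rfl⟩ : ∃ n : ℕ, z = ((n+1:ℕ):ℤ) := ⟨(z-1).toNat, by omega⟩
    rw [show ((n+1:ℕ):ℤ) - 1 = (n:ℤ) by push_cast; ring, hInt_nat, hInt_nat]
    have := Tr_hh_rec (0:R) n
    rw [sub_eq_iff_eq_add] at this
    rw [this]; simp

lemma Tr_hInt_coeff (n : ℕ) (z : ℤ) : (Tr 0 (hInt (R := R) z)).coeff n = hInt (z - n) := by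
  induction n generalizing z with
  | zero => rw [Tr_coeff_zero]; simp
  | succ n ih =>
    rw [Tr_hInt]
    simp only [Polynomial.coeff_add, Polynomial.coeff_C_succ, Polynomial.coeff_X_mul, zero_add]
    rw [ih]; congr 1; push_cast; ring

lemma JT_coeff (N : ℕ) (v : ℕ → ℕ) (n : ℕ) (hv : ∀ i, v (i+1) ≤ v 0) (hn : v 0 ≤ n) :
    (Tr 0 (JT (R := R) (N+1) v)).coeff n = if n = v 0 then JT N (fun i => v (i+1)) else 0 := by
  let A : Matrix (Fin (N+1)) (Fin (N+1)) (LY R) := Matrix.of fun i j => 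
    Tr 0 (hInt (R := R) (((v i : ℕ) : ℤ) + (j : ℤ) - (i : ℤ)))
  let B : Matrix (Fin (N+1)) (Fin (N+1)) (LY R) := Matrix.of fun i j => 
    if j = 0 then Tr 0 (hInt (R := R) (((v i : ℕ) : ℤ) + (j : ℤ) - (i : ℤ))) else
      Polynomial.C (hInt (R := R) (((v i : ℕ) : ℤ) + (j : ℤ) - (i : ℤ)))
  let B' : Matrix (Fin (N+1)) (Fin N) (SymFn R) := Matrix.of fun i j => 
      (hInt (R := R) (((v i : ℕ) : ℤ) + ((j.succ : Fin (N+1)) : ℤ) - (i : ℤ)))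
  have hA : Tr 0 (JT (R := R) (N+1) v) = A.det := by
    rw [JT, AlgHom.map_det]; rfl
  have hAB : A.det = B.det := by
    apply Matrix.det_eq_of_forall_col_eq_smul_add_pred (fun _ => Polynomial.X)
    · intro i; simp [A, B]
    · intro i j
      simp only [A, B, Matrix.of_apply]
      rw [if_neg (Fin.succ_ne_zero j), Tr_hInt]
      congr 3
      simp; ring_nf
  have hm : ∀ i : Fin (N+1), (B.submatrix i.succAbove Fin.succ).det = 
      Polynomial.C ((B'.submatrix i.succAbove id).det) := by
    intro i
    rw [RingHom.map_det]
    congr 1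
  rw [hA, hAB, Matrix.det_succ_column_zero, Fin.sum_univ_succ]
  simp only [hm, Polynomial.coeff_add, Polynomial.finsetSum_coeff, Polynomial.coeff_mul_C]
  rw [Finset.sum_eq_zero, add_zero]
  · simp only [Fin.val_zero, pow_zero, one_mul]
    have h0 : (B 0 0).coeff n = if n = v 0 then 1 else 0 := by
      simp only [B, Matrix.of_apply, if_true]
      rw [Tr_hInt_coeff]
      split_ifs with h
      · subst h
        have := hInt_nat (R := R) 0
        rw [hh_zero] at this
        rw [← this]; congr 1; simp
      · apply hInt_neg; simp; omega
    rw [h0]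
    split_ifs with h
    · rw [one_mul, JT]
      congr 1
      ext1 a b
      simp only [B', Matrix.submatrix_apply, Matrix.of_apply, Fin.succAbove_zero, Fin.val_succ, id]
      congr 1; push_cast; ring
    · simp
  · intro i _
    have : ((-1 : LY R) ^ ((i.succ : Fin (N+1)) : ℕ) * B i.succ 0).coeff n = 0 := by
      have e : ((-1 : LY R) ^ ((i.succ : Fin (N+1)) : ℕ)) = Polynomial.C ((-1) ^ ((i.succ : Fin (N+1)) : ℕ)) := by simp
      rw [e, Polynomial.coeff_C_mul]
      simp only [B, Matrix.of_apply, if_true]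
      rw [Tr_hInt_coeff, hInt_neg, mul_zero]
      have := hv i
      simp; omega
    rw [this, zero_mul]

lemma schur_zero : schur (R := R) 0 = 1 := by
  rw [schur_eq_JT, JT]; simp

lemma schur_coeff {m : ℕ+} {μ : Multiset ℕ+} (hm : ∀ a ∈ μ, a ≤ m) {n : ℕ} (hn : (m:ℕ) ≤ n) :
    (Tr 0 (schur (R := R) (m ::ₘ μ))).coeff n = if n = m then schur μ else 0 := by
  rw [schur_eq_JT, Multiset.card_cons, descParts_cons hm, JT_coeff]
  · rfl
  · intro i
    simp only [List.getD_cons_succ, List.getD_cons_zero]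
    by_cases h : i < (descParts μ).length
    · rw [List.getD_eq_getElem _ _ h]
      have : (descParts μ)[i] ∈ (descParts μ : Multiset ℕ) := by simp
      rw [descParts_perm, Multiset.mem_map] at this
      obtain ⟨a, ha, h2⟩ := this
      rw [← h2]; exact_mod_cast hm a ha
    · rw [List.getD_eq_default _ _ (by omega)]; omega
  · simpa using hn

lemma pair_h_schur (ν : Multiset ℕ+) : ∀ μ, (key μ < key ν → ipL (fun _ => (1:R)) (hP ν) (schur μ) = 0) ∧ 
    (μ = ν → ipL (fun _ => (1:R)) (hP ν) (schur μ) = 1) := by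
  induction ν using maxInd with
  | h0 =>
    intro μ
    constructor
    · intro h
      by_cases hl : μ = 0
      · rw [hl] at h; exact absurd h (lt_irrefl _)
      · exact absurd h (lt_asymm (key_zero_lt hl))
    · rintro rfl
      rw [schur_zero, hP_zero]
      have : (1 : SymFn R) = monomial 0 1 := rfl
      rw [this, ipL_monomial]; simp [wc]
  | h1 n ν hn ih =>
    intro μ
    rw [hP_cons, hall_adjoint]
    induction μ using maxInd with
    | h0 =>
      constructor
      · intro _
        rw [schur_zero, map_one, Polynomial.coeff_one, if_neg n.pos.ne', map_zero]
      · intro h; simp at h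
    | h1 m μ hm _ =>
      rcases lt_trichotomy m n with h1 | h1 | h1
      · rw [schur_coeff hm (by exact_mod_cast h1.le), if_neg (by exact_mod_cast h1.ne'), map_zero]
        refine ⟨fun _ => rfl, fun h => ?_⟩
        exfalso
        have : n ∈ m ::ₘ μ := by rw [h]; simp
        rcases Multiset.mem_cons.1 this with h2 | h2
        · exact h1.ne h2.symm
        · exact absurd (hm n h2) (not_le.2 h1)
      · subst h1
        rw [schur_coeff hm le_rfl, if_pos rfl]
        constructor
        · intro h
          rw [← Multiset.singleton_add, ← Multiset.singleton_add] at h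
          exact (ih μ).1 (key_of_add_lt_left _ h)
        · intro h
          exact (ih μ).2 ((Multiset.cons_inj_right _).1 h)
      · have : key (n ::ₘ ν) < key (m ::ₘ μ) := by
          refine key_lt_of_mem (k := m) ?_ (by simp)
          intro a ha
          rcases Multiset.mem_cons.1 ha with rfl | ha
          · exact h1
          · exact lt_of_le_of_lt (hn a ha) h1
        refine ⟨fun h => absurd h (lt_asymm this), fun h => ?_⟩
        rw [h] at this; exact absurd this (lt_irrefl _)

end MacAux
end MacAuxSec4

open MvPolynomial
noncomputable section MacAuxSec5
namespace MacAux
set_option linter.unusedSectionVars false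

lemma down_ind {P : Multiset ℕ+ → Prop} 
    (h : ∀ ν, (∀ ρ, key ν < key ρ → wt ρ = wt ν → P ρ) → P ν) (ν : Multiset ℕ+) : P ν := by
  have : IsStrictOrder (Multiset ℕ+) (fun a b => key b < key a) :=
    { irrefl := fun a => lt_irrefl _
      trans := fun a b c h1 h2 => lt_trans h2 h1 }
  have := Set.Finite.wellFoundedOn (r := fun a b => key b < key a) (finite_wt (wt ν))
  refine Set.WellFoundedOn.induction this (x := ν) rfl ?_
  intro y hy ih
  apply h
  intro ρ h1 h2
  exact ih ρ (h2.trans hy) h1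

section Ring
variable {R : Type} [CommRing R] [Algebra ℚ R]

/-- families unitriangular with respect to `h` -/
def UB (B : Multiset ℕ+ → SymFn R) : Prop := ∀ ν, B ν - hP ν ∈ Up ν

lemma UB_hP : UB (hP (R := R)) := fun ν => by rw [sub_self]; exact Submodule.zero_mem _

lemma Up_mono {μ ν : Multiset ℕ+} (h : key μ ≤ key ν) (hw : wt ν = wt μ) : Up (R := R) ν ≤ Up μ := by
  apply Submodule.span_mono
  apply Set.image_mono
  rintro ρ ⟨h1, h2⟩
  exact ⟨lt_of_le_of_lt h h1, h2.trans hw⟩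

lemma UB_mem_Up {B : Multiset ℕ+ → SymFn R} (hB : UB B) {μ ν : Multiset ℕ+} (h : key μ < key ν) (hw : wt ν = wt μ) :
    B ν ∈ Up μ := by
  rw [← sub_add_cancel (B ν) (hP ν)]
  exact Submodule.add_mem _ (Up_mono h.le hw (hB ν)) (hP_mem_Up h hw)

/-- span of the larger members of a family -/
def UpB (B : Multiset ℕ+ → SymFn R) (μ : Multiset ℕ+) : Submodule R (SymFn R) :=
  Submodule.span R (B '' {ν | key μ < key ν ∧ wt ν = wt μ})

lemma UpB_mono (B : Multiset ℕ+ → SymFn R) {μ ν : Multiset ℕ+} (h : key μ ≤ key ν) (hw : wt ν = wt μ) : UpB B ν ≤ UpB B μ := by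
  apply Submodule.span_mono
  apply Set.image_mono
  rintro ρ ⟨h1, h2⟩
  exact ⟨lt_of_le_of_lt h h1, h2.trans hw⟩

lemma mem_UpB (B : Multiset ℕ+ → SymFn R) {μ ν : Multiset ℕ+} (h : key μ < key ν) (hw : wt ν = wt μ) : B ν ∈ UpB B μ := 
  Submodule.subset_span ⟨ν, ⟨h, hw⟩, rfl⟩

lemma Up_le_UpB {B : Multiset ℕ+ → SymFn R} (hB : UB B) (ν : Multiset ℕ+) : Up ν ≤ UpB B ν := by
  induction ν using down_ind with
  | h ν ih =>
    apply Submodule.span_le.2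
    rintro _ ⟨ρ, ⟨h1, h2⟩, rfl⟩
    have e : hP ρ = B ρ - (B ρ - hP ρ) := by ring
    rw [e]
    apply Submodule.sub_mem _ (mem_UpB B h1 h2)
    exact UpB_mono B h1.le h2 (ih ρ h1 h2 (hB ρ))

lemma UpB_le_Up {B : Multiset ℕ+ → SymFn R} (hB : UB B) (ν : Multiset ℕ+) : UpB B ν ≤ Up ν := by
  apply Submodule.span_le.2
  rintro _ ⟨ρ, ⟨h1, h2⟩, rfl⟩
  exact UB_mem_Up hB h1 h2

lemma UB_span {B : Multiset ℕ+ → SymFn R} (hB : UB B) : Submodule.span R (Set.range B) = ⊤ := by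
  rw [eq_top_iff, ← hP_span, Submodule.span_le]
  rintro _ ⟨ν, rfl⟩
  have e : hP ν = B ν - (B ν - hP ν) := by ring
  rw [e]
  refine Submodule.sub_mem (Submodule.span R (Set.range B)) (Submodule.subset_span (Set.mem_range_self ν)) ?_
  exact Submodule.span_mono (Set.image_subset_range _ _) (Up_le_UpB hB ν (hB ν))

lemma Dop_Up (q s : R) {μ : Multiset ℕ+} {f : SymFn R} (hf : f ∈ Up μ) : Dop q s f ∈ Up μ := by
  have : Up μ ≤ (Up (R := R) μ).comap (Dop q s) := by
    apply Submodule.span_le.2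
    rintro _ ⟨ρ, ⟨h1, h2⟩, rfl⟩
    have h := Dop_hP q s ρ
    rw [SetLike.mem_coe, Submodule.mem_comap, ← sub_add_cancel (Dop q s (hP ρ)) (C (eig q s ρ) * hP ρ)]
    exact Submodule.add_mem _ (Up_mono h1.le h2 h) (C_mul_mem _ (hP_mem_Up h1 h2))
  exact this hf

lemma Dop_UB {B : Multiset ℕ+ → SymFn R} (hB : UB B) (q s : R) (μ : Multiset ℕ+) : 
    Dop q s (B μ) - eig q s μ • B μ ∈ Up μ := by
  have e : Dop q s (B μ) - eig q s μ • B μ = (Dop q s (hP μ) - C (eig q s μ) * hP μ) + Dop q s (B μ - hP μ) 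
    - eig q s μ • (B μ - hP μ) := by
    rw [map_sub, ← MvPolynomial.smul_eq_C_mul, smul_sub]; abel
  rw [e]
  exact Submodule.sub_mem _ (Submodule.add_mem _ (Dop_hP q s μ) (Dop_Up q s (hB μ))) (Submodule.smul_mem _ _ (hB μ))

lemma map_Up {R' : Type} [CommRing R'] [Algebra ℚ R'] (φ : R →+* R') {μ : Multiset ℕ+} {f : SymFn R} (hf : f ∈ Up μ) :
    MvPolynomial.map φ f ∈ Up μ := by
  replace hf : f ∈ Submodule.span R (hP '' {ν | key μ < key ν ∧ wt ν = wt μ}) := hf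
  induction hf using Submodule.span_induction with
  | mem x hx =>
    obtain ⟨ρ, ⟨h1, h2⟩, rfl⟩ := hx
    rw [map_hP]; exact hP_mem_Up h1 h2
  | zero => rw [map_zero]; exact Submodule.zero_mem _
  | add x y _ _ hx hy => rw [map_add]; exact Submodule.add_mem _ hx hy
  | smul a x _ hx => rw [MvPolynomial.smul_eq_C_mul, map_mul, MvPolynomial.map_C]; exact C_mul_mem _ hx

lemma map_UB {R' : Type} [CommRing R'] [Algebra ℚ R'] (φ : R →+* R') {B : Multiset ℕ+ → SymFn R} (hB : UB B) :
    UB (fun ν => MvPolynomial.map φ (B ν)) := by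
  intro ν
  have := map_Up φ (hB ν)
  rwa [map_sub, map_hP] at this

/-- dual functionals -/
def Tri (p : Multiset ℕ+ → SymFn R →ₗ[R] R) (B : Multiset ℕ+ → SymFn R) : Prop :=
  ∀ ν lam, (key lam < key ν → p lam (B ν) = 0) ∧ (lam = ν → p lam (B ν) = 1)

lemma Tri_UB {p : Multiset ℕ+ → SymFn R →ₗ[R] R} (hp : Tri p hP) {B : Multiset ℕ+ → SymFn R} (hB : UB B) : Tri p B := by
  have key0 : ∀ ν lam, key lam ≤ key ν → ∀ f ∈ Up ν, p lam f = 0 := by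
    intro ν lam h f hf
    have : Up ν ≤ LinearMap.ker (p lam) := by
      apply Submodule.span_le.2
      rintro _ ⟨ρ, ⟨h1, h2⟩, rfl⟩
      exact (hp ρ lam).1 (lt_of_le_of_lt h h1)
    exact this hf
  intro ν lam
  constructor
  · intro h
    rw [← sub_add_cancel (B ν) (hP ν), map_add, key0 ν lam h.le _ (hB ν), (hp ν lam).1 h, add_zero]
  · rintro rfl
    rw [← sub_add_cancel (B lam) (hP lam), map_add, key0 lam lam le_rfl _ (hB lam), (hp lam lam).2 rfl, zero_add]

lemma Tri_lc {p : Multiset ℕ+ → SymFn R →ₗ[R] R} {B : Multiset ℕ+ → SymFn R} (hp : Tri p B)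
    (l : Multiset ℕ+ →₀ R) (ν : Multiset ℕ+) (h : ∀ ρ, key ρ < key ν → l ρ = 0) : 
    p ν (Finsupp.linearCombination R B l) = l ν := by
  rw [Finsupp.linearCombination_apply, Finsupp.sum, map_sum]
  have : ∀ ρ ∈ l.support, p ν (l ρ • B ρ) = if ρ = ν then l ν else 0 := by
    intro ρ _
    rw [map_smul, smul_eq_mul]
    split_ifs with h1
    · subst h1; rw [(hp ρ ρ).2 rfl, mul_one]
    · rcases lt_trichotomy (key ρ) (key ν) with h2 | h2 | h2
      · rw [h _ h2, zero_mul]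
      · exact absurd (key_inj h2) h1
      · rw [(hp ρ ν).1 h2, mul_zero]
  rw [Finset.sum_congr rfl this, Finset.sum_ite_eq']
  split_ifs with h1
  · rfl
  · exact (Finsupp.notMem_support_iff.1 h1).symm

lemma Tri_min {p : Multiset ℕ+ → SymFn R →ₗ[R] R} {B : Multiset ℕ+ → SymFn R} (hp : Tri p B)
    (l : Multiset ℕ+ →₀ R) (hl : l ≠ 0) : ∃ ν, (∀ ρ, key ρ < key ν → l ρ = 0) ∧ l ν ≠ 0 ∧ 
      p ν (Finsupp.linearCombination R B l) = l ν := by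
  obtain ⟨ν, hν, hmin⟩ := Finset.exists_min_image l.support key (Finsupp.support_nonempty_iff.2 hl)
  have h : ∀ ρ, key ρ < key ν → l ρ = 0 := by
    intro ρ hρ
    by_contra h0
    exact absurd (hmin ρ (Finsupp.mem_support_iff.2 h0)) (not_le.2 hρ)
  exact ⟨ν, h, Finsupp.mem_support_iff.1 hν, Tri_lc hp l ν h⟩

lemma Tri_li {p : Multiset ℕ+ → SymFn R →ₗ[R] R} {B : Multiset ℕ+ → SymFn R} (hp : Tri p B) : LinearIndependent R B := by
  rw [linearIndependent_iff]
  intro l hl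
  by_contra h
  obtain ⟨ν, _, h1, h2⟩ := Tri_min hp l h
  rw [hl, map_zero] at h2
  exact h1 h2.symm

lemma Tri_zero {p : Multiset ℕ+ → SymFn R →ₗ[R] R} {B : Multiset ℕ+ → SymFn R} (hp : Tri p B) (hB : UB B) {v : SymFn R}
    (hv : ∀ lam, p lam v = 0) : v = 0 := by
  have : v ∈ Submodule.span R (Set.range B) := by rw [UB_span hB]; trivial
  rw [Finsupp.mem_span_range_iff_exists_finsupp] at this
  obtain ⟨l, rfl⟩ := this
  have e : (l.sum fun i a => a • B i) = Finsupp.linearCombination R B l := (Finsupp.linearCombination_apply R l).symm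
  rw [e] at hv ⊢
  by_cases h : l = 0
  · rw [h, map_zero]
  · obtain ⟨ν, _, h1, h2⟩ := Tri_min hp l h
    rw [hv] at h2
    exact absurd h2.symm h1

lemma Tri_repr {p : Multiset ℕ+ → SymFn R →ₗ[R] R} (b : Module.Basis (Multiset ℕ+) R (SymFn R)) (hp : Tri p b) 
    {v : SymFn R} {μ : Multiset ℕ+} (hμ : p μ v = 1) (hv : ∀ lam, lam ≠ μ → p lam v = 0) [Nontrivial R] : 
    b.repr v μ = 1 ∧ ∀ ρ, key ρ < key μ → b.repr v ρ = 0 := by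
  have e : Finsupp.linearCombination R b (b.repr v) = v := b.linearCombination_repr v
  have h0 : b.repr v ≠ 0 := by
    intro h
    rw [h, map_zero] at e
    rw [← e, map_zero] at hμ
    exact zero_ne_one hμ
  obtain ⟨ν, h1, h2, h3⟩ := Tri_min hp (b.repr v) h0
  have : ν = μ := by
    by_contra hne
    rw [e, hv ν hne] at h3
    exact h2 h3.symm
  subst this
  exact ⟨by rw [← h3, e, hμ], h1⟩

end Ring

section Fld
variable {R : Type} [Field R] [CharZero R]

/-- Hall pairing with `P lam` -/
def hallP (P : Multiset ℕ+ → SymFn R) (lam : Multiset ℕ+) : SymFn R →ₗ[R] R := (ipL (fun _ => (1:R))).flip (P lam)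

lemma Tri_schur : Tri (hallP (schur (R := R))) hP := fun ν lam => pair_h_schur ν lam

lemma Tri_P {P : Multiset ℕ+ → SymFn R} (h : ∀ lam, P lam - schur lam ∈
      Submodule.span R ((schur (R := R)) '' {mu | StrictDom mu lam})) : Tri (hallP P) hP := by
  have key0 : ∀ ν lam, key lam ≤ key ν → ipL (fun _ => (1:R)) (hP ν) (P lam - schur lam) = 0 := by
    intro ν lam hle
    have : Submodule.span R ((schur (R := R)) '' {mu | StrictDom mu lam}) ≤ LinearMap.ker (ipL (fun _ => (1:R)) (hP ν)) := by
      apply Submodule.span_le.2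
      rintro _ ⟨ρ, h1, rfl⟩
      exact (pair_h_schur ν ρ).1 (lt_of_lt_of_le (key_lt_of_strictDom h1) hle)
    exact this (h lam)
  intro ν lam
  have e : hallP P lam (hP ν) = ipL (fun _ => (1:R)) (hP ν) (P lam - schur lam) + ipL (fun _ => (1:R)) (hP ν) (schur lam) := by
    rw [← map_add, sub_add_cancel]; rfl
  constructor
  · intro hlt
    rw [e, key0 _ _ hlt.le, (pair_h_schur ν lam).1 hlt, add_zero]
  · rintro rfl
    rw [e, key0 _ _ le_rfl, (pair_h_schur lam lam).2 rfl, zero_add]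

/-- the basis attached to a unitriangular family -/
def basisOf {B : Multiset ℕ+ → SymFn R} (hB : UB B) : Module.Basis (Multiset ℕ+) R (SymFn R) :=
  Module.Basis.mk (Tri_li (Tri_UB Tri_schur hB)) (UB_span hB).ge

lemma basisOf_apply {B : Multiset ℕ+ → SymFn R} (hB : UB B) (ν : Multiset ℕ+) : basisOf hB ν = B ν := by
  simp [basisOf]
end Fld

end MacAux
end MacAuxSec5

open MvPolynomial
noncomputable section MacAuxSec6
namespace MacAux
set_option linter.unusedSectionVars false

section Ring
variable {R : Type} [CommRing R] [Algebra ℚ R]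

lemma gen_sum (a : ℕ → ℕ → R) (n : ℕ) : 
    gen (fun k => ∑ i ∈ Finset.range n, a i k) = ∏ i ∈ Finset.range n, gen (a i) := by
  induction n with
  | zero => 
    ext1 m
    simp only [gen, PowerSeries.coeff_mk, Finset.range_zero, Finset.sum_empty, Finset.prod_empty, PowerSeries.coeff_one]
    cases m with
    | zero => simp [Eseq_zero]
    | succ m =>
      apply rat_cancel (n := m)
      rw [Eseq_succ]; simp
  | succ n ih =>
    rw [Finset.prod_range_succ, ← ih, ← gen_add]
    simp only [Finset.sum_range_succ]

lemma prod_hh (d : ℕ → ℕ) (s : Finset ℕ) : ∃ ν : Multiset ℕ+, ∏ i ∈ s, hh (R := R) (d i) = hP ν ∧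
    wt ν = ∑ i ∈ s, d i ∧ ∀ i ∈ s, ∀ k : ℕ+, d i = k → k ∈ ν := by
  induction s using Finset.induction_on with
  | empty => exact ⟨0, by simp [hP_zero, wt_zero]⟩
  | insert j s hj ih =>
    obtain ⟨ν, h1, h2, h3⟩ := ih
    rcases Nat.eq_zero_or_pos (d j) with h | h
    · refine ⟨ν, by rw [Finset.prod_insert hj, h, hh_zero, h1, one_mul], by rw [Finset.sum_insert hj, h2, h, zero_add], ?_⟩
      intro i hi k hk
      rcases Finset.mem_insert.1 hi with rfl | hi
      · rw [h] at hk; exact absurd hk.symm k.pos.ne'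
      · exact h3 i hi k hk
    · obtain ⟨k0, hk0⟩ : ∃ k0 : ℕ+, (k0:ℕ) = d j := ⟨⟨d j, h⟩, rfl⟩
      refine ⟨k0 ::ₘ ν, by rw [Finset.prod_insert hj, hP_cons, h1, hk0], by rw [Finset.sum_insert hj, wt_cons, h2, hk0], ?_⟩
      intro i hi k hk
      rcases Finset.mem_insert.1 hi with rfl | hi
      · rw [← hk0] at hk; rw [PNat.coe_inj.1 hk]; exact Multiset.mem_cons_self _ _
      · exact Multiset.mem_cons_of_mem (h3 i hi k hk)

end Ring

variable {K : Type} [Field K] [CharZero K]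

/-- power sums of roots of unity -/
def rsum (σ : K) (l : ℕ) (k : ℕ) : K := ∑ i ∈ Finset.range l, σ ^ (i * k)

lemma rsum_zero {σ : K} {l : ℕ} (hσ : σ ^ l = 1) {k : ℕ} (hk : σ ^ k ≠ 1) : rsum σ l k = 0 := by
  have : rsum σ l k = ∑ i ∈ Finset.range l, (σ ^ k) ^ i := by
    unfold rsum; apply Finset.sum_congr rfl; intro i _; rw [← pow_mul, mul_comm]
  rw [this, geom_sum_eq hk, ← pow_mul, mul_comm, pow_mul, hσ, one_pow, sub_self, zero_div]

lemma Tr_Eseq_rsum {σ : K} {l : ℕ} (hσ : σ ^ l = 1) (n : ℕ) : 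
    Tr σ (Eseq (rsum σ l) n) = Polynomial.C (Eseq (rsum σ l) n) := by
  induction n using Nat.strong_induction_on with
  | _ n ih =>
    cases n with
    | zero => simp [Eseq_zero]
    | succ n =>
      have h := congrArg (Tr σ) (Eseq_succ (rsum σ l) n)
      have h2 := congrArg (Polynomial.C) (Eseq_succ (rsum σ l) n)
      rw [map_mul, map_sum] at h h2
      apply rat_cancel (n := n)
      have e : Tr σ ((n : SymFn K) + 1) = (n : LY K) + 1 := by simp
      have e2 : (Polynomial.C ((n : SymFn K) + 1) : LY K) = (n : LY K) + 1 := by simp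
      rw [e] at h
      rw [e2] at h2
      rw [h, h2]
      apply Finset.sum_congr rfl
      intro i hi
      rw [map_mul, map_mul, map_mul, map_mul, ih _ (by have := Finset.mem_range.1 hi; omega), Tr_C, Tr_X]
      by_cases h : σ ^ (i+1) = 1
      · simp [h]
      · simp [rsum_zero hσ h]

/-- the building blocks -/
def Fa (σ : K) (l : ℕ) (a : ℕ+) : SymFn K := 
  C ((∏ i ∈ Finset.range l, (σ ^ i) ^ (a:ℕ))⁻¹) * Eseq (rsum σ l) (l * a)

lemma Tr_Fa {σ : K} {l : ℕ} (hσ : σ ^ l = 1) (a : ℕ+) : Tr σ (Fa σ l a) = Polynomial.C (Fa σ l a) := by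
  rw [Fa, map_mul, Tr_C, Tr_Eseq_rsum hσ, map_mul]

lemma Fa_tri {σ : K} (h0 : σ ≠ 0) (l : ℕ) (a : ℕ+) : Fa σ l a - hP (l • {a}) ∈ Up (l • {a}) := by
  classical
  have hc : (∏ i ∈ Finset.range l, (σ ^ i) ^ (a:ℕ)) ≠ 0 := Finset.prod_ne_zero_iff.2 fun i _ => pow_ne_zero _ (pow_ne_zero _ h0)
  have h1 : Eseq (rsum σ l) (l * a) = ∑ d ∈ Finset.finsuppAntidiag (Finset.range l) (l * (a:ℕ)), 
      C (∏ i ∈ Finset.range l, (σ ^ i) ^ (d i)) * ∏ i ∈ Finset.range l, hh (d i) := by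
    have h := congrArg (PowerSeries.coeff (l * (a:ℕ))) (gen_sum (fun i k => (σ ^ i) ^ k * 1) l)
    have e : (fun k => ∑ i ∈ Finset.range l, (σ ^ i) ^ k * 1) = rsum σ l := by
      funext k; simp [rsum, pow_mul]
    rw [e, PowerSeries.coeff_prod] at h
    rw [gen, PowerSeries.coeff_mk] at h
    rw [h]
    apply Finset.sum_congr rfl
    intro d _
    rw [map_prod, ← Finset.prod_mul_distrib]
    apply Finset.prod_congr rfl
    intro i _
    rw [gen, PowerSeries.coeff_mk, Eseq_pow_mul, hh]
  have hmem : Finsupp.onFinset (Finset.range l) (fun i => if i < l then (a:ℕ) else 0) (by simp) ∈ 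
      Finset.finsuppAntidiag (Finset.range l) (l * (a:ℕ)) := by
    rw [Finset.mem_finsuppAntidiag]
    refine ⟨?_, Finsupp.support_onFinset_subset⟩
    rw [Finset.sum_congr rfl (g := fun _ => (a:ℕ)) (by intro x hx; simpa using fun h => absurd (Finset.mem_range.1 hx) (not_lt.2 h))]
    simp
  rw [Fa, h1, ← Finset.add_sum_erase _ _ hmem, mul_add, Finset.mul_sum, add_comm, add_sub_assoc]
  apply Submodule.add_mem
  · apply Submodule.sum_mem
    intro d hd
    apply C_mul_mem
    apply C_mul_mem
    rw [Finset.mem_erase, Finset.mem_finsuppAntidiag] at hd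
    obtain ⟨hne, hsum, hsupp⟩ := hd
    obtain ⟨ν, e1, e2, e3⟩ := prod_hh (R := K) d (Finset.range l)
    rw [e1]
    have hw : wt ν = wt (l • ({a} : Multiset ℕ+)) := by rw [e2, hsum, wt_nsmul, wt_singleton]
    apply hP_mem_Up _ hw
    have : ∃ i ∈ Finset.range l, (a:ℕ) < d i := by
      by_contra hcon
      push Not at hcon
      have := (Finset.sum_eq_sum_iff_of_le hcon).1 (by rw [hsum]; simp)
      apply hne
      ext i
      by_cases hi : i < l
      · simp [this i (Finset.mem_range.2 hi), hi]
      · have : i ∉ d.support := fun h => hi (Finset.mem_range.1 (hsupp h))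
        rw [Finsupp.notMem_support_iff] at this
        simp [this, hi]
    obtain ⟨i, hi, hlt⟩ := this
    obtain ⟨k, hk⟩ : ∃ k : ℕ+, (k:ℕ) = d i := ⟨⟨d i, by omega⟩, rfl⟩
    apply key_lt_of_mem (k := k) _ (e3 i hi k hk.symm)
    intro b hb
    have hb := Multiset.mem_of_mem_nsmul hb
    rw [Multiset.mem_singleton] at hb
    subst hb
    rw [← PNat.coe_lt_coe]; omega
  · have e : ∀ i ∈ Finset.range l, (if i < l then (a:ℕ) else 0) = a := fun i hi => if_pos (Finset.mem_range.1 hi)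
    simp only [Finsupp.onFinset_apply]
    have e1 : ∏ i ∈ Finset.range l, (σ ^ i) ^ (if i < l then (a:ℕ) else 0) = ∏ i ∈ Finset.range l, (σ ^ i) ^ (a:ℕ) :=
      Finset.prod_congr rfl (fun i hi => by rw [e i hi])
    rw [e1, Finset.prod_congr (g := fun i => hh (R := K) (a:ℕ)) rfl (fun i hi => by rw [e i hi]), ← mul_assoc, ← C_mul, inv_mul_cancel₀ hc]
    have : hP (R := K) (l • {a}) = hh (a:ℕ) ^ l := by rw [hP_nsmul]; simp [hP]
    rw [this]
    simp

end MacAux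
end MacAuxSec6

open MvPolynomial
noncomputable section MacAuxSec7
namespace MacAux
set_option linter.unusedSectionVars false

/-- multiplicities divided by `l` -/
def quo (l : ℕ) (μ : Multiset ℕ+) : Multiset ℕ+ := 
  Finsupp.toMultiset (Finsupp.mapRange (fun m => m / l) (Nat.zero_div l) (Multiset.toFinsupp μ))
/-- multiplicities modulo `l` -/
def bar (l : ℕ) (μ : Multiset ℕ+) : Multiset ℕ+ := 
  Finsupp.toMultiset (Finsupp.mapRange (fun m => m % l) (Nat.zero_mod l) (Multiset.toFinsupp μ))

lemma count_quo (l : ℕ) (μ : Multiset ℕ+) (a : ℕ+) : (quo l μ).count a = μ.count a / l := by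
  simp [quo, Finsupp.count_toMultiset]
lemma count_bar (l : ℕ) (μ : Multiset ℕ+) (a : ℕ+) : (bar l μ).count a = μ.count a % l := by
  simp [bar, Finsupp.count_toMultiset]

lemma quo_bar (l : ℕ) (μ : Multiset ℕ+) : l • quo l μ + bar l μ = μ := by
  ext a
  rw [Multiset.count_add, Multiset.count_nsmul, count_quo, count_bar, Nat.div_add_mod]

lemma bar_add (l : ℕ) (β μ : Multiset ℕ+) : bar l (l • β + μ) = bar l μ := by
  ext a
  simp [count_bar, Multiset.count_nsmul]

lemma quo_add {l : ℕ} (hl : 0 < l) (β μ : Multiset ℕ+) : quo l (l • β + μ) = β + quo l μ := by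
  ext a
  simp [count_quo, Multiset.count_nsmul, Nat.mul_add_div hl]

lemma bar_bar (l : ℕ) (μ : Multiset ℕ+) : bar l (bar l μ) = bar l μ := by
  ext a
  simp [count_bar]

lemma quo_bar_zero {l : ℕ} (_hl : 0 < l) (μ : Multiset ℕ+) : quo l (bar l μ) = 0 := by
  ext a
  simp [count_bar, count_quo, Nat.mod_div_self]

lemma bar_zero (l : ℕ) : bar l 0 = 0 := by
  ext a; simp [count_bar]
lemma quo_zero (l : ℕ) : quo l 0 = 0 := by
  ext a; simp [count_quo]

lemma eq_of_bar {l : ℕ} (hl : 0 < l) {ν lam : Multiset ℕ+} (h : bar l ν = lam) (hw : wt ν = wt lam) : ν = lam := by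
  have h1 := quo_bar l ν
  have h2 : wt (quo l ν) = 0 := by
    have := congrArg wt h1
    rw [wt_add, wt_nsmul, h, hw] at this
    have h3 : l * wt (quo l ν) = 0 := by omega
    rcases Nat.mul_eq_zero.1 h3 with h4 | h4
    · omega
    · exact h4
  rw [wt_eq_zero h2, h] at h1
  simpa using h1.symm

lemma single_max {β : Multiset ℕ+} {a : ℕ+} (hw : wt β = a) (h : key {a} ≤ key β) : β = {a} := by
  have h2 : ∃ b ∈ β, a ≤ b := by
    by_contra hcon
    push Not at hcon
    exact absurd (key_lt_of_mem hcon (Multiset.mem_singleton_self a)) (not_lt.2 h)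
  obtain ⟨b, hb, hab⟩ := h2
  obtain ⟨γ, rfl⟩ := Multiset.exists_cons_of_mem hb
  rw [wt_cons] at hw
  have h3 : (a:ℕ) ≤ b := hab
  have h4 : wt γ = 0 := by omega
  have h5 : (b:ℕ) = a := by omega
  rw [wt_eq_zero h4, PNat.coe_inj.1 h5]
  rfl

section Ring
variable {R : Type} [CommRing R] [Algebra ℚ R]

lemma Up_mul {μ ν : Multiset ℕ+} {f g : SymFn R} (hf : f ∈ Up μ) (hg : g ∈ Up ν) : f * g ∈ Up (μ + ν) := by
  replace hf : f ∈ Submodule.span R (hP '' {ν | key μ < key ν ∧ wt ν = wt μ}) := hf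
  induction hf using Submodule.span_induction with
  | mem x hx =>
    obtain ⟨ρ, ⟨h1, h2⟩, rfl⟩ := hx
    exact Up_mono (key_add_lt_right _ h1).le (by rw [wt_add, wt_add, h2]) (hP_mul_Up ρ hg)
  | zero => rw [zero_mul]; exact Submodule.zero_mem _
  | add x y _ _ hx hy => rw [add_mul]; exact Submodule.add_mem _ hx hy
  | smul a x _ hx => rw [smul_mul_assoc]; exact Submodule.smul_mem _ _ hx

lemma tri_mul {μ ν : Multiset ℕ+} {f g : SymFn R} (hf : f - hP μ ∈ Up μ) (hg : g - hP ν ∈ Up ν) : 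
    f * g - hP (μ + ν) ∈ Up (μ + ν) := by
  have e : f * g - hP (μ + ν) = (f - hP μ) * (g - hP ν) + hP μ * (g - hP ν) + hP ν * (f - hP μ) := by
    rw [hP_add]; ring
  rw [e]
  refine Submodule.add_mem _ (Submodule.add_mem _ (Up_mul hf hg) (hP_mul_Up _ hg)) ?_
  rw [add_comm μ ν]
  exact hP_mul_Up _ hf
end Ring

variable {K : Type} [Field K] [CharZero K]

lemma exists_g {l : ℕ} (hl : 0 < l) {q σ : K} (hG : ∀ μ ρ, bar l μ ≠ bar l ρ → eig q σ μ ≠ eig q σ ρ) (lam : Multiset ℕ+) :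
    ∃ g : SymFn K, g - hP lam ∈ Up lam ∧ (bar l lam = lam → Dop q σ g = eig q σ lam • g) := by
  by_cases hlam : bar l lam = lam
  swap
  · exact ⟨hP lam, by rw [sub_self]; exact Submodule.zero_mem _, fun h => absurd h hlam⟩
  let E : SymFn K →ₗ[K] SymFn K := Dop q σ - eig q σ lam • LinearMap.id
  have hE : ∀ f, E f = Dop q σ f - eig q σ lam • f := fun f => rfl
  let W : Submodule K (SymFn K) := (Up lam).map E
  have key1 : ∀ ν, key lam < key ν → wt ν = wt lam → hP ν ∈ W := by
    intro ν
    induction ν using down_ind with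
    | h ν ih =>
      intro h1 h2
      have hW : Up ν ≤ W := by
        apply Submodule.span_le.2
        rintro _ ⟨ρ, ⟨h3, h4⟩, rfl⟩
        exact ih ρ h3 h4 (h1.trans h3) (h4.trans h2)
      have hne : eig q σ ν - eig q σ lam ≠ 0 := by
        rw [sub_ne_zero]
        apply hG
        intro h
        rw [hlam] at h
        rw [eq_of_bar hl h h2] at h1
        exact lt_irrefl _ h1
      have h5 : E (hP ν) ∈ W := Submodule.mem_map_of_mem (hP_mem_Up h1 h2)
      have h6 := hW (Dop_UB (UB_hP (R := K)) q σ ν)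
      have h7 : (eig q σ ν - eig q σ lam) • hP ν = E (hP ν) - (Dop q σ (hP ν) - eig q σ ν • hP ν) := by
        rw [hE, sub_smul]; abel
      have h8 : (eig q σ ν - eig q σ lam) • hP ν ∈ W := by rw [h7]; exact W.sub_mem h5 h6
      exact (W.smul_mem_iff hne).1 h8
  have h1 : Up lam ≤ W := by
    apply Submodule.span_le.2
    rintro _ ⟨ρ, ⟨h3, h4⟩, rfl⟩
    exact key1 ρ h3 h4
  obtain ⟨f, hf, hf2⟩ := h1 (Dop_UB (UB_hP (R := K)) q σ lam)
  refine ⟨hP lam - f, by rw [sub_sub_cancel_left]; exact Submodule.neg_mem _ hf, fun _ => ?_⟩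
  rw [← sub_eq_zero, ← hE, map_sub, hf2, hE, sub_self]

lemma g_zero {g : SymFn K} (h : g - hP 0 ∈ Up 0) : g = 1 := by
  have h2 : Up (R := K) 0 = ⊥ := by
    rw [Up, Submodule.span_eq_bot]
    rintro _ ⟨ρ, ⟨h3, h4⟩, rfl⟩
    rw [wt_zero] at h4
    rw [wt_eq_zero h4] at h3
    exact absurd h3 (lt_irrefl _)
  rw [h2, Submodule.mem_bot, sub_eq_zero, hP_zero] at h
  exact h

/-- the adapted basis -/
def BB (σ : K) (l : ℕ) (g : Multiset ℕ+ → SymFn K) (μ : Multiset ℕ+) : SymFn K :=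
  ((quo l μ).map (Fa σ l)).prod * g (bar l μ)

lemma BB_add {σ : K} {l : ℕ} (hl : 0 < l) (g : Multiset ℕ+ → SymFn K) (a : ℕ+) (μ : Multiset ℕ+) : 
    BB σ l g (l • {a} + μ) = Fa σ l a * BB σ l g μ := by
  rw [BB, BB, quo_add hl, bar_add]; simp [mul_assoc]

lemma BB_red {σ : K} {l : ℕ} (hl : 0 < l) (g : Multiset ℕ+ → SymFn K) (μ : Multiset ℕ+) : 
    BB σ l g (bar l μ) = g (bar l μ) := by
  rw [BB, quo_bar_zero hl, bar_bar]; simp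

lemma BB_UB {σ : K} (h0 : σ ≠ 0) {l : ℕ} {g : Multiset ℕ+ → SymFn K} (hg : UB g) : UB (BB σ l g) := by
  have h1 : ∀ β : Multiset ℕ+, (β.map (Fa σ l)).prod - hP (l • β) ∈ Up (l • β) := by
    intro β
    induction β using Multiset.induction with
    | empty => simp [hP_zero]
    | cons a β ih =>
      rw [Multiset.map_cons, Multiset.prod_cons, ← Multiset.singleton_add, smul_add]
      exact tri_mul (Fa_tri h0 l a) ih
  intro μ
  have := tri_mul (h1 (quo l μ)) (hg (bar l μ))
  rwa [quo_bar] at this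

lemma Dop_Fa_mul {σ : K} {l : ℕ} (hσ : σ ^ l = 1) (q : K) (a : ℕ+) (f : SymFn K) : 
    Dop q σ (Fa σ l a * f) = Fa σ l a * Dop q σ f := by
  rw [Dop_apply, map_mul, Tr_Fa hσ, Lop_C_mul, Dop_apply]

/-- induction over `l`-blocks -/
lemma block_ind {l : ℕ} {P : Multiset ℕ+ → Prop} (h0 : ∀ lam, bar l lam = lam → P lam) 
    (h1 : ∀ a μ, P μ → P (l • {a} + μ)) (μ : Multiset ℕ+) : P μ := by
  have : ∀ β lam, bar l lam = lam → P (l • β + lam) := by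
    intro β lam hlam
    induction β using Multiset.induction with
    | empty => simpa using h0 lam hlam
    | cons a β ih =>
      rw [← Multiset.singleton_add, smul_add, add_assoc]
      exact h1 _ _ ih
  rw [← quo_bar l μ]
  exact this _ _ (bar_bar _ _)

lemma BB_self {σ : K} {l : ℕ} (hl : 0 < l) {g : Multiset ℕ+ → SymFn K} {lam : Multiset ℕ+} (h : bar l lam = lam) :
    BB σ l g lam = g lam := by
  have := BB_red (σ := σ) hl g lam
  rwa [h] at this

lemma Dop_BB {σ : K} {l : ℕ} (hl : 0 < l) (hσ : σ ^ l = 1) {q : K} {g : Multiset ℕ+ → SymFn K} 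
    (hg : ∀ lam, bar l lam = lam → Dop q σ (g lam) = eig q σ lam • g lam) (μ : Multiset ℕ+) :
    Dop q σ (BB σ l g μ) = eig q σ (bar l μ) • BB σ l g μ := by
  induction μ using block_ind (l := l) with
  | h0 lam h => rw [BB_self hl h, h, hg _ h]
  | h1 a μ ih => rw [BB_add hl, Dop_Fa_mul hσ, ih, bar_add, mul_smul_comm]

end MacAux
end MacAuxSec7

open MvPolynomial
noncomputable section MacAuxSec8
namespace MacAux
set_option linter.unusedSectionVars false

lemma single_max_l {l : ℕ} (hl : 0 < l) {β : Multiset ℕ+} {a : ℕ+} (hw : wt β = a) (h : key (l • {a}) ≤ key (l • β)) : β = {a} := by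
  apply single_max hw
  by_contra hcon
  have h1 : ∀ b ∈ β, b < a := by
    intro b hb
    by_contra hab
    apply hcon
    push Not at hab
    obtain ⟨γ, rfl⟩ := Multiset.exists_cons_of_mem hb
    rw [wt_cons] at hw
    have h3 : (a:ℕ) ≤ b := hab
    have h4 : wt γ = 0 := by omega
    have h5 : (b:ℕ) = a := by omega
    rw [wt_eq_zero h4, PNat.coe_inj.1 h5]
    exact le_rfl
  apply absurd h (not_le.2 _)
  apply key_lt_of_mem (k := a)
  · intro b hb
    exact h1 b (Multiset.mem_of_mem_nsmul hb)
  · rw [Multiset.mem_nsmul]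
    exact ⟨hl.ne', Multiset.mem_singleton_self a⟩

section smulaux
variable {A S : Type} [CommRing A] [CommRing S] [Algebra A S]
lemma smulaux1 (f d p b : S) (c1 c2 : A) : p - (c2-c1)•(f*b) = (f*d+p - c2•(f*b)) - f*(d - c1•b) := by
  simp only [Algebra.smul_def, map_sub]; ring
lemma smulaux2 (f d p b : S) (c1 c2 : A) : (f * d + p) - (c1 + c2)•(f*b) = f*(d - c1•b) + (p - c2 • (f*b)) := by
  simp only [Algebra.smul_def, map_add]; ring
lemma smulaux3 (f f' p b w : S) (c t : A) : t • (f * p + t • w) - c•(f'*(f * b)) = f*(t • p - c•(f'*b)) + t ^ 2 • w := by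
  simp only [Algebra.smul_def, map_pow]; ring
end smulaux

variable {K : Type} [Field K] 

section bc
variable (S : Type) [CommRing S] [Algebra K S]

/-- base change of a basis of symmetric functions -/
def bc (b : Module.Basis (Multiset ℕ+) K (SymFn K)) : Module.Basis (Multiset ℕ+) S (SymFn S) :=
  (b.baseChange S).map (MvPolynomial.algebraTensorAlgEquiv K S).toLinearEquiv

lemma bc_apply (b : Module.Basis (Multiset ℕ+) K (SymFn K)) (ν : Multiset ℕ+) : 
    bc S b ν = MvPolynomial.map (algebraMap K S) (b ν) := by
  simp [bc]

variable {S}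
lemma bc_map {S' : Type} [CommRing S'] [Algebra K S'] (f : S →+* S') (hf : f.comp (algebraMap K S) = algebraMap K S')
    (b : Module.Basis (Multiset ℕ+) K (SymFn K)) (x : SymFn S) (ρ : Multiset ℕ+) : 
    (bc S' b).repr (MvPolynomial.map f x) ρ = f ((bc S b).repr x ρ) := by
  have hb : ∀ ν, MvPolynomial.map f (bc S b ν) = bc S' b ν := by
    intro ν
    rw [bc_apply, bc_apply, MvPolynomial.map_map, hf]
  have h1 : MvPolynomial.map f x = Finsupp.linearCombination S' (bc S' b) (Finsupp.mapRange f (map_zero f) ((bc S b).repr x)) := by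
    conv_lhs => rw [← (bc S b).linearCombination_repr x]
    rw [Finsupp.linearCombination_apply, Finsupp.linearCombination_apply, Finsupp.sum_mapRange_index (by simp), Finsupp.sum, 
      map_sum, Finsupp.sum]
    apply Finset.sum_congr rfl
    intro ν _
    rw [MvPolynomial.smul_eq_C_mul, map_mul, MvPolynomial.map_C, hb, MvPolynomial.smul_eq_C_mul]
  rw [h1, Module.Basis.repr_linearCombination, Finsupp.mapRange_apply]

lemma bc_self (b : Module.Basis (Multiset ℕ+) K (SymFn K)) : bc K b = b := by
  apply Module.Basis.eq_of_apply_eq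
  intro ν
  rw [bc_apply, Algebra.algebraMap_self, MvPolynomial.map_id]
end bc

section C
variable [CharZero K] {q σ : K} {l : ℕ} {g : Multiset ℕ+ → SymFn K}

abbrev tau (σ : K) : Polynomial K := Polynomial.X - Polynomial.C σ

abbrev evM (σ : K) : SymFn (Polynomial K) →+* SymFn K := MvPolynomial.map (Polynomial.evalRingHom σ)

lemma evM_dvd {x : SymFn (Polynomial K)} (h : evM σ x = 0) : C (tau σ) ∣ x := by
  rw [MvPolynomial.C_dvd_iff_dvd_coeff]
  intro m
  rw [Polynomial.dvd_iff_isRoot]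
  have := congrArg (MvPolynomial.coeff m) h
  rwa [MvPolynomial.coeff_map, MvPolynomial.coeff_zero] at this

/-- scalar extension to polynomials in `s` -/
abbrev io : SymFn K →+* SymFn (Polynomial K) := MvPolynomial.map (algebraMap K (Polynomial K))

lemma evM_io (x : SymFn K) : evM σ (io x) = x := by
  rw [evM, io, MvPolynomial.map_map]
  have : (Polynomial.evalRingHom σ).comp (algebraMap K (Polynomial K)) = RingHom.id K := by
    ext c; simp
  rw [this, MvPolynomial.map_id]

/-- the operator over polynomials in `s` -/
abbrev DA (q : K) : SymFn (Polynomial K) →ₗ[Polynomial K] SymFn (Polynomial K) := Dop (Polynomial.C q) Polynomial.X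

lemma evM_DA (x : SymFn (Polynomial K)) : evM σ (DA q x) = Dop q σ (evM σ x) := by
  rw [evM, DA, Dop_map]; simp

lemma exists_G (hσ : σ ^ l = 1) (a : ℕ+) : ∃ G : LY (Polynomial K), 
    Tr Polynomial.X (io (Fa σ l a)) = Polynomial.C (io (Fa σ l a)) + Polynomial.C (C (tau σ)) * G := by
  have h : Polynomial.C (C (tau σ)) ∣ Tr Polynomial.X (io (Fa σ l a)) - Polynomial.C (io (Fa σ l a)) := by
    rw [Polynomial.C_dvd_iff_dvd_coeff]
    intro i
    apply evM_dvd
    have h1 := Tr_map (Polynomial.evalRingHom σ) Polynomial.X (io (Fa σ l a))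
    have h2 := congrArg (fun p => Polynomial.coeff p i) h1
    have h3 : MvPolynomial.map (Polynomial.evalRingHom σ) (io (Fa σ l a)) = Fa σ l a := evM_io _
    rw [h3] at h2
    simp only [Polynomial.coeff_map, Polynomial.coe_evalRingHom, Polynomial.eval_X, Tr_Fa hσ] at h2
    rw [Polynomial.coeff_sub, map_sub, sub_eq_zero, evM, h2, Polynomial.coeff_C, Polynomial.coeff_C]
    split_ifs
    · exact h3.symm
    · simp
  obtain ⟨G, hG⟩ := h
  exact ⟨G, by rw [← hG]; ring⟩

open Classical in
/-- a choice of remainder -/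
def GG (σ : K) (l : ℕ) (a : ℕ+) : LY (Polynomial K) := 
  if hσ : σ ^ l = 1 then (exists_G hσ a).choose else 0
lemma GG_spec (hσ : σ ^ l = 1) (a : ℕ+) : 
    Tr Polynomial.X (io (Fa σ l a)) = Polynomial.C (io (Fa σ l a)) + Polynomial.C (C (tau σ)) * GG σ l a := by
  rw [GG, dif_pos hσ]; exact (exists_G hσ a).choose_spec

def Psi (q σ : K) (l : ℕ) (a : ℕ+) (f : SymFn (Polynomial K)) : SymFn (Polynomial K) := 
  Lop (Polynomial.C q) (GG σ l a * Tr Polynomial.X f)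

lemma DA_Fa (hσ : σ ^ l = 1) (a : ℕ+) (f : SymFn (Polynomial K)) : 
    DA q (io (Fa σ l a) * f) = io (Fa σ l a) * DA q f + tau σ • Psi q σ l a f := by
  rw [DA, Dop_apply, map_mul, GG_spec hσ, add_mul, map_add, Lop_C_mul, mul_assoc, Lop_C_mul, Psi, Dop_apply, MvPolynomial.smul_eq_C_mul]

lemma Psi_Fa (hσ : σ ^ l = 1) (a b : ℕ+) (f : SymFn (Polynomial K)) : ∃ w,
    Psi q σ l a (io (Fa σ l b) * f) = io (Fa σ l b) * Psi q σ l a f + tau σ • w := by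
  refine ⟨Lop (Polynomial.C q) (GG σ l a * (GG σ l b * Tr Polynomial.X f)), ?_⟩
  rw [Psi, map_mul (Tr Polynomial.X), GG_spec hσ]
  have : GG σ l a * ((Polynomial.C (io (Fa σ l b)) + Polynomial.C (C (tau σ)) * GG σ l b) * Tr Polynomial.X f)
    = Polynomial.C (io (Fa σ l b)) * (GG σ l a * Tr Polynomial.X f) + Polynomial.C (C (tau σ)) * (GG σ l a * (GG σ l b * Tr Polynomial.X f)) := by
    ring
  rw [this, map_add, Lop_C_mul, Lop_C_mul, Psi, MvPolynomial.smul_eq_C_mul]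

variable (q σ l g) in
/-- the error module -/
def JJ (lam : Multiset ℕ+) : Submodule (Polynomial K) (SymFn (Polynomial K)) :=
  Submodule.span _ ({x | ∃ ρ, bar l ρ ≠ lam ∧ x = tau σ • io (BB σ l g ρ)} ∪ {x | ∃ ρ, x = (tau σ ^ 2) • io (BB σ l g ρ)})

lemma JJ_mul (hl : 0 < l) {lam : Multiset ℕ+} (a : ℕ+) {x : SymFn (Polynomial K)} (hx : x ∈ JJ σ l g lam) : 
    io (Fa σ l a) * x ∈ JJ σ l g lam := by
  rw [JJ] at hx
  induction hx using Submodule.span_induction with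
  | mem x hx =>
    rcases hx with ⟨ρ, h, rfl⟩ | ⟨ρ, rfl⟩
    · apply Submodule.subset_span
      left
      refine ⟨l • {a} + ρ, by rwa [bar_add], ?_⟩
      rw [BB_add hl, map_mul, mul_smul_comm]
    · apply Submodule.subset_span
      right
      refine ⟨l • {a} + ρ, ?_⟩
      rw [BB_add hl, map_mul, mul_smul_comm]
  | zero => rw [mul_zero]; exact Submodule.zero_mem _
  | add x y _ _ hx hy => rw [mul_add]; exact Submodule.add_mem _ hx hy
  | smul a x _ hx => rw [mul_smul_comm]; exact Submodule.smul_mem _ _ hx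

variable (b : Module.Basis (Multiset ℕ+) K (SymFn K)) 

lemma JJ_of (hb : ∀ ν, b ν = BB σ l g ν) {lam : Multiset ℕ+} {x : SymFn (Polynomial K)} (h1 : ∀ ρ, tau σ ∣ (bc (Polynomial K) b).repr x ρ)
    (h2 : ∀ ρ, bar l ρ = lam → (tau σ)^2 ∣ (bc (Polynomial K) b).repr x ρ) : x ∈ JJ σ l g lam := by
  rw [← (bc (Polynomial K) b).linearCombination_repr x, Finsupp.linearCombination_apply]
  apply Submodule.sum_mem
  intro ρ _
  simp only
  rw [bc_apply, hb]
  by_cases h : bar l ρ = lam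
  · obtain ⟨c, hc⟩ := h2 ρ h
    rw [hc, mul_comm, mul_smul]
    exact Submodule.smul_mem _ _ (Submodule.subset_span (Or.inr ⟨ρ, rfl⟩))
  · obtain ⟨c, hc⟩ := h1 ρ
    rw [hc, mul_comm, mul_smul]
    exact Submodule.smul_mem _ _ (Submodule.subset_span (Or.inl ⟨ρ, h, rfl⟩))

lemma JJ_sq (hb : ∀ ν, b ν = BB σ l g ν) {lam : Multiset ℕ+} (x : SymFn (Polynomial K)) : (tau σ ^ 2) • x ∈ JJ σ l g lam := by
  apply JJ_of b hb
  · intro ρ; rw [map_smul, Finsupp.smul_apply, smul_eq_mul, pow_two, mul_assoc]; exact dvd_mul_right _ _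
  · intro ρ _; rw [map_smul, Finsupp.smul_apply, smul_eq_mul]; exact dvd_mul_right _ _

lemma JJ_repr (hb : ∀ ν, b ν = BB σ l g ν) {lam : Multiset ℕ+} {x : SymFn (Polynomial K)} (hx : x ∈ JJ σ l g lam) (ρ : Multiset ℕ+) :
    tau σ ∣ (bc (Polynomial K) b).repr x ρ ∧ (bar l ρ = lam → (tau σ)^2 ∣ (bc (Polynomial K) b).repr x ρ) := by
  classical
  rw [JJ] at hx
  induction hx using Submodule.span_induction with
  | mem x hx =>
    have hr : ∀ ν, (bc (Polynomial K) b).repr (io (BB σ l g ν)) ρ = if ν = ρ then 1 else 0 := by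
      intro ν
      rw [← hb, ← bc_apply, Module.Basis.repr_self, Finsupp.single_apply]
    rcases hx with ⟨ν, h, rfl⟩ | ⟨ν, rfl⟩
    · rw [map_smul, Finsupp.smul_apply, smul_eq_mul, hr]
      refine ⟨dvd_mul_right _ _, fun h2 => ?_⟩
      rw [if_neg (by rintro rfl; exact h h2), mul_zero]
      exact dvd_zero _
    · rw [map_smul, Finsupp.smul_apply, smul_eq_mul, pow_two, mul_assoc]
      exact ⟨dvd_mul_right _ _, fun _ => by rw [← mul_assoc]; exact dvd_mul_right _ _⟩
  | zero => simp
  | add x y _ _ hx hy => 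
    rw [map_add, Finsupp.add_apply]
    exact ⟨dvd_add hx.1 hy.1, fun h => dvd_add (hx.2 h) (hy.2 h)⟩
  | smul a x _ hx => 
    rw [map_smul, Finsupp.smul_apply, smul_eq_mul]
    exact ⟨Dvd.dvd.mul_left hx.1 _, fun h => Dvd.dvd.mul_left (hx.2 h) _⟩

variable (q)
lemma DA_tri (hb : ∀ ν, b ν = BB σ l g ν) (hU : UB (BB σ l g)) (μ ρ : Multiset ℕ+) 
    (h : (bc (Polynomial K) b).repr (DA q (bc (Polynomial K) b μ) - eig (Polynomial.C q) Polynomial.X μ • bc (Polynomial K) b μ) ρ ≠ 0) : 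
    key μ < key ρ ∧ wt ρ = wt μ := by
  have hbb : (bc (Polynomial K) b : Multiset ℕ+ → _) = fun ν => io (BB σ l g ν) := by
    funext ν; rw [bc_apply, hb]
  have hU' : UB (bc (Polynomial K) b : Multiset ℕ+ → _) := by
    rw [hbb]; exact map_UB _ hU
  have h1 := Up_le_UpB hU' μ (Dop_UB hU' (Polynomial.C q) Polynomial.X μ)
  rw [UpB, Module.Basis.mem_span_image] at h1
  exact h1 (Finset.mem_coe.2 (Finsupp.mem_support_iff.2 h))

lemma DA_base (hb : ∀ ν, b ν = BB σ l g ν) (hU : UB (BB σ l g)) 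
    (hD : ∀ μ, Dop q σ (BB σ l g μ) = eig q σ (bar l μ) • BB σ l g μ) {μ : Multiset ℕ+} 
    (hμ : ∀ ρ, key μ < key ρ → wt ρ = wt μ → bar l ρ ≠ bar l μ) :
    DA q (io (BB σ l g μ)) - eig (Polynomial.C q) Polynomial.X μ • io (BB σ l g μ) ∈ JJ σ l g (bar l μ) := by
  have hbb : ∀ ν, io (BB σ l g ν) = bc (Polynomial K) b ν := by
    intro ν; rw [bc_apply, hb]
  apply JJ_of b hb
  · intro ρ
    by_cases h : (bc (Polynomial K) b).repr (DA q (io (BB σ l g μ)) - eig (Polynomial.C q) Polynomial.X μ • io (BB σ l g μ)) ρ = 0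
    · rw [h]; exact dvd_zero _
    · have h2 := DA_tri q b hb hU μ ρ (by rwa [hbb] at h)
      rw [Polynomial.dvd_iff_isRoot, Polynomial.IsRoot, ← Polynomial.coe_evalRingHom, 
        ← bc_map (S' := K) (Polynomial.evalRingHom σ) (by ext c; simp), map_sub, bc_self,
        MvPolynomial.smul_eq_C_mul, map_mul, MvPolynomial.map_C]
      have h3 := evM_DA (q := q) (σ := σ) (io (BB σ l g μ))
      have h4 := evM_io (σ := σ) (BB σ l g μ)
      rw [h4] at h3
      rw [evM] at h3 h4
      rw [h3, h4, hD, ← MvPolynomial.smul_eq_C_mul, ← hb, map_sub, map_smul, map_smul, Module.Basis.repr_self]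
      have : μ ≠ ρ := by rintro rfl; exact lt_irrefl _ h2.1
      simp [this]
  · intro ρ hρ
    by_cases h : (bc (Polynomial K) b).repr (DA q (io (BB σ l g μ)) - eig (Polynomial.C q) Polynomial.X μ • io (BB σ l g μ)) ρ = 0
    · rw [h]; exact dvd_zero _
    · have h2 := DA_tri q b hb hU μ ρ (by rwa [hbb] at h)
      exact absurd hρ (hμ ρ h2.1 h2.2)

lemma DA_claim (hl : 0 < l) (hσ : σ ^ l = 1) (hb : ∀ ν, b ν = BB σ l g ν) (hU : UB (BB σ l g)) 
    (hD : ∀ μ, Dop q σ (BB σ l g μ) = eig q σ (bar l μ) • BB σ l g μ) (μ : Multiset ℕ+) :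
    (∃ c : Polynomial K, DA q (io (BB σ l g μ)) - c • io (BB σ l g μ) ∈ JJ σ l g (bar l μ)) ∧
    (∀ a, ∃ c : Polynomial K, tau σ • Psi q σ l a (io (BB σ l g μ)) - c • (io (Fa σ l a) * io (BB σ l g μ)) ∈ JJ σ l g (bar l μ)) := by
  induction μ using block_ind (l := l) with
  | h0 lam h =>
    have h1 := DA_base q b hb hU hD (μ := lam) (by
      intro ρ h1 h2 h3
      rw [h] at h3
      rw [eq_of_bar hl h3 h2] at h1
      exact lt_irrefl _ h1)
    refine ⟨⟨_, h1⟩, fun a => ?_⟩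
    have h2 := DA_base q b hb hU hD (μ := l • {a} + lam) (by
      intro ρ h1 h2 h3
      rw [bar_add, h] at h3
      have h4 := quo_bar l ρ
      rw [h3] at h4
      rw [← h4, wt_add, wt_add, wt_nsmul, wt_nsmul, wt_singleton] at h2
      rw [← h4] at h1
      have h5 : wt (quo l ρ) = a := Nat.eq_of_mul_eq_mul_left hl (by omega)
      have h6 : key (l • {a}) < key (l • quo l ρ) := by
        rw [add_comm _ lam, add_comm _ lam] at h1
        exact key_of_add_lt_left _ h1
      rw [single_max_l hl h5 h6.le] at h6
      exact lt_irrefl _ h6)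
    rw [bar_add, BB_add hl, map_mul, DA_Fa hσ] at h2
    refine ⟨eig (Polynomial.C q) Polynomial.X (l • {a} + lam) - eig (Polynomial.C q) Polynomial.X lam, ?_⟩
    have h3 := Submodule.sub_mem _ h2 (JJ_mul hl a h1)
    rw [smulaux1 _ (DA q (io (BB σ l g lam)))]
    exact h3
  | h1 a μ ih =>
    obtain ⟨⟨c, hc⟩, h2⟩ := ih
    rw [BB_add hl, map_mul, bar_add]
    constructor
    · obtain ⟨c2, hc2⟩ := h2 a
      refine ⟨c + c2, ?_⟩
      have h3 := Submodule.add_mem _ (JJ_mul hl a hc) hc2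
      rw [DA_Fa hσ, smulaux2]
      exact h3
    · intro a'
      obtain ⟨c2, hc2⟩ := h2 a'
      obtain ⟨w, hw⟩ := Psi_Fa (q := q) hσ a' a (io (BB σ l g μ))
      refine ⟨c2, ?_⟩
      have h3 := Submodule.add_mem _ (JJ_mul hl a hc2) (JJ_sq b hb (lam := bar l μ) w)
      rw [hw, smulaux3]
      exact h3

/-- summary of the matrix of `D` over polynomials in `s` -/
lemma DA_coef (hl : 0 < l) (hσ : σ ^ l = 1) (hb : ∀ ν, b ν = BB σ l g ν) (hU : UB (BB σ l g)) 
    (hD : ∀ μ, Dop q σ (BB σ l g μ) = eig q σ (bar l μ) • BB σ l g μ) (ν ρ : Multiset ℕ+) :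
    (ρ = ν → (bc (Polynomial K) b).repr (DA q (bc (Polynomial K) b ν)) ρ = eig (Polynomial.C q) Polynomial.X ν) ∧
    (ρ ≠ ν → ¬ (key ν < key ρ) → (bc (Polynomial K) b).repr (DA q (bc (Polynomial K) b ν)) ρ = 0) ∧
    (ρ ≠ ν → tau σ ∣ (bc (Polynomial K) b).repr (DA q (bc (Polynomial K) b ν)) ρ) ∧ 
    (ρ ≠ ν → bar l ρ = bar l ν → tau σ ^ 2 ∣ (bc (Polynomial K) b).repr (DA q (bc (Polynomial K) b ν)) ρ) := by
  have h1 := DA_tri q b hb hU ν ρ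
  obtain ⟨⟨c, hc⟩, _⟩ := DA_claim q b hl hσ hb hU hD ν
  have h2 := JJ_repr b hb hc ρ
  rw [← hb, ← bc_apply, map_sub, map_smul, Module.Basis.repr_self, Finsupp.sub_apply] at h2
  rw [map_sub, map_smul, Module.Basis.repr_self, Finsupp.sub_apply] at h1
  refine ⟨?_, ?_, ?_, ?_⟩
  · rintro rfl
    by_contra h
    refine lt_irrefl _ (h1 ?_).1
    rw [sub_ne_zero]
    simpa using h
  · intro hne h3
    by_contra h
    refine h3 (h1 ?_).1
    simpa [hne.symm] using h
  · intro hne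
    simpa [hne.symm] using h2.1
  · intro hne h3
    have := h2.2 h3
    simpa [hne.symm] using this
end C

end MacAux
end MacAuxSec8

open MvPolynomial
noncomputable section MacAuxSec9
namespace MacAux
set_option linter.unusedSectionVars false

variable {K : Type} [Field K] {F : Type} [Field F]

/-- divisible by `τ^k` in the local ring at `s = σ` -/
def RG (θ : Polynomial K →+* F) (σ : K) (k : ℕ) (x : F) : Prop :=
  ∃ a b : Polynomial K, b.eval σ ≠ 0 ∧ θ b * x = θ (tau σ ^ k * a)

section RGl
variable {θ : Polynomial K →+* F} {σ : K}

lemma RG_zero (k : ℕ) : RG θ σ k 0 := ⟨0, 1, by simp, by simp⟩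
lemma RG_one : RG θ σ 0 1 := ⟨1, 1, by simp, by simp⟩

lemma RG_add {k : ℕ} {x y : F} (hx : RG θ σ k x) (hy : RG θ σ k y) : RG θ σ k (x + y) := by
  obtain ⟨a, b, h1, h2⟩ := hx
  obtain ⟨c, d, h3, h4⟩ := hy
  refine ⟨a * d + c * b, b * d, by rw [Polynomial.eval_mul]; exact mul_ne_zero h1 h3, ?_⟩
  rw [map_mul] at h2 h4
  simp only [map_mul, map_add]
  linear_combination θ d * h2 + θ b * h4

lemma RG_sum {ι : Type} {k : ℕ} (s : Finset ι) (f : ι → F) (h : ∀ i ∈ s, RG θ σ k (f i)) : RG θ σ k (∑ i ∈ s, f i) :=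
  Finset.sum_induction f (RG θ σ k) (fun _ _ => RG_add) (RG_zero k) h

lemma RG_mono {k : ℕ} {x : F} (hx : RG θ σ (k+1) x) : RG θ σ k x := by
  obtain ⟨a, b, h1, h2⟩ := hx
  exact ⟨tau σ * a, b, h1, by rw [h2]; ring_nf⟩

lemma RG_mul {k m : ℕ} {x : F} {d : Polynomial K} (hx : RG θ σ k x) (hd : tau σ ^ m ∣ d) : RG θ σ (k+m) (x * θ d) := by
  obtain ⟨a, b, h1, h2⟩ := hx
  obtain ⟨c, rfl⟩ := hd
  refine ⟨a * c, b, h1, ?_⟩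
  rw [← mul_assoc, h2, ← map_mul]; ring_nf

lemma RG_div (hθ : Function.Injective θ) {k j : ℕ} {x : F} {E : Polynomial K} (hE : E.eval σ ≠ 0) 
    (hx : RG θ σ (k+j) (θ (tau σ ^ j * E) * x)) : RG θ σ k x := by
  obtain ⟨a, b, h1, h2⟩ := hx
  refine ⟨a, b * E, by rw [Polynomial.eval_mul]; exact mul_ne_zero h1 hE, ?_⟩
  have h0 : θ (tau σ ^ j) ≠ 0 := by
    rw [Ne, map_eq_zero_iff θ hθ]
    exact pow_ne_zero _ (Polynomial.X_sub_C_ne_zero σ)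
  apply mul_left_cancel₀ h0
  rw [pow_add] at h2
  simp only [map_mul] at h2 ⊢
  linear_combination h2
end RGl

variable [CharZero K] [CharZero F] [Algebra K F] {q σ : K} {l : ℕ} {g : Multiset ℕ+ → SymFn K}

theorem recursion (θ : Polynomial K →+* F) (hθ : Function.Injective θ) (hθK : θ.comp (algebraMap K (Polynomial K)) = algebraMap K F)
    (hl : 0 < l) (hσ : σ ^ l = 1) (b : Module.Basis (Multiset ℕ+) K (SymFn K)) (hb : ∀ ν, b ν = BB σ l g ν) (hU : UB (BB σ l g)) 
    (hD : ∀ μ, Dop q σ (BB σ l g μ) = eig q σ (bar l μ) • BB σ l g μ)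
    (hG1 : ∀ μ ρ, bar l μ ≠ bar l ρ → eig q σ μ ≠ eig q σ ρ)
    (hG2 : ∀ μ ρ, μ ≠ ρ → bar l μ = bar l ρ → ¬ (tau σ ^ 2 ∣ eig (Polynomial.C q) Polynomial.X μ - eig (Polynomial.C q) Polynomial.X ρ))
    (x : SymFn F) (μ : Multiset ℕ+) (hx : Dop (algebraMap K F q) (θ Polynomial.X) x = eig (algebraMap K F q) (θ Polynomial.X) μ • x)
    (h1 : (bc F b).repr x μ = 1) (h2 : ∀ ρ, key ρ < key μ → (bc F b).repr x ρ = 0) :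
    ∀ m, RG θ σ 1 (coeff m x - algebraMap K F (coeff m (BB σ l g μ))) := by
  classical
  set c := (bc F b).repr x with hc
  set d : Multiset ℕ+ → Multiset ℕ+ → Polynomial K := fun ν ρ => (bc (Polynomial K) b).repr (DA q (bc (Polynomial K) b ν)) ρ with hd
  have hθq : θ (Polynomial.C q) = algebraMap K F q := by rw [← hθK]; rfl
  have hxs : x = ∑ ν ∈ c.support, c ν • bc F b ν := by
    conv_lhs => rw [← (bc F b).linearCombination_repr x, Finsupp.linearCombination_apply]
    rfl
  have hDb : ∀ ν ρ, (bc F b).repr (Dop (algebraMap K F q) (θ Polynomial.X) (bc F b ν)) ρ = θ (d ν ρ) := by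
    intro ν ρ
    have e : MvPolynomial.map θ (bc (Polynomial K) b ν) = bc F b ν := by
      rw [bc_apply, bc_apply, MvPolynomial.map_map, hθK]
    have e2 : MvPolynomial.map θ (DA q (bc (Polynomial K) b ν)) = Dop (algebraMap K F q) (θ Polynomial.X) (bc F b ν) := by
      rw [DA, Dop_map, hθq, e]
    rw [← e2, bc_map θ hθK]
  have hrec : ∀ ρ, ∑ ν ∈ c.support, c ν * θ (d ν ρ) = θ (eig (Polynomial.C q) Polynomial.X μ) * c ρ := by
    intro ρ
    have h : (bc F b).repr (Dop (algebraMap K F q) (θ Polynomial.X) x) ρ = 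
        (bc F b).repr (eig (algebraMap K F q) (θ Polynomial.X) μ • x) ρ := by rw [hx]
    rw [map_smul, Finsupp.smul_apply, smul_eq_mul, ← hc, ← hθq, ← map_eig] at h
    rw [← h]
    conv_rhs => rw [hxs]
    rw [map_sum, map_sum, Finsupp.finsetSum_apply]
    apply Finset.sum_congr rfl
    intro ν _
    rw [map_smul, map_smul, Finsupp.smul_apply, smul_eq_mul, hθq, hDb]
  have hco := DA_coef q b hl hσ hb hU hD
  have hrec2 : ∀ ρ, θ (eig (Polynomial.C q) Polynomial.X μ - eig (Polynomial.C q) Polynomial.X ρ) * c ρ = 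
      ∑ ν ∈ c.support.erase ρ, c ν * θ (d ν ρ) := by
    intro ρ
    rw [map_sub, sub_mul, ← hrec]
    have hdd : d ρ ρ = eig (Polynomial.C q) Polynomial.X ρ := (hco ρ ρ).1 rfl
    by_cases hρ : ρ ∈ c.support
    · rw [← Finset.add_sum_erase _ _ hρ, hdd]; ring
    · rw [Finset.erase_eq_of_notMem hρ, Finsupp.notMem_support_iff.1 hρ]; ring
  have main : ∀ ρ, ρ ≠ μ → RG θ σ 1 (c ρ) := by
    by_contra hcon
    push Not at hcon
    have hne : (c.support.filter fun ρ => ρ ≠ μ ∧ ¬ RG θ σ 1 (c ρ)).Nonempty := by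
      obtain ⟨ρ, h3, h4⟩ := hcon
      refine ⟨ρ, Finset.mem_filter.2 ⟨?_, h3, h4⟩⟩
      rw [Finsupp.mem_support_iff]
      intro h0
      rw [h0] at h4
      exact h4 (RG_zero 1)
    obtain ⟨ρ, hρ, hmin⟩ := Finset.exists_min_image _ key hne
    rw [Finset.mem_filter] at hρ
    obtain ⟨_, hρμ, hbad⟩ := hρ
    apply hbad
    have hgood : ∀ ν ∈ c.support, key ν < key ρ → ν ≠ μ → RG θ σ 1 (c ν) := by
      intro ν hν hlt hνμ
      by_contra h
      exact absurd (hmin ν (Finset.mem_filter.2 ⟨hν, hνμ, h⟩)) (not_le.2 hlt)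
    by_cases hbar : bar l μ = bar l ρ
    · have hE := hG2 μ ρ hρμ.symm hbar
      have hS : RG θ σ 2 (θ (eig (Polynomial.C q) Polynomial.X μ - eig (Polynomial.C q) Polynomial.X ρ) * c ρ) := by
        rw [hrec2]
        apply RG_sum
        intro ν hν
        rw [Finset.mem_erase] at hν
        by_cases hlt : key ν < key ρ
        · by_cases hνμ : ν = μ
          · subst hνμ
            rw [h1]
            exact RG_mul (k := 0) (m := 2) RG_one ((hco ν ρ).2.2.2 hν.1.symm hbar.symm)
          · refine RG_mul (k := 1) (m := 1) (hgood ν hν.2 hlt hνμ) ?_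
            rw [pow_one]
            exact (hco ν ρ).2.2.1 hν.1.symm
        · have : d ν ρ = 0 := (hco ν ρ).2.1 hν.1.symm hlt
          rw [this, map_zero, mul_zero]
          exact RG_zero _
      by_cases hτ : tau σ ∣ eig (Polynomial.C q) Polynomial.X μ - eig (Polynomial.C q) Polynomial.X ρ
      · obtain ⟨E, hEE⟩ := hτ
        rw [hEE] at hS hE
        refine RG_div (j := 1) (E := E) hθ ?_ ?_
        · intro h
          apply hE
          rw [pow_two]
          exact mul_dvd_mul_left _ (Polynomial.dvd_iff_isRoot.2 h)
        · rw [pow_one]; exact hS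
      · refine RG_div (j := 0) (E := eig (Polynomial.C q) Polynomial.X μ - eig (Polynomial.C q) Polynomial.X ρ) hθ ?_ ?_
        · intro h; exact hτ (Polynomial.dvd_iff_isRoot.2 h)
        · rw [pow_zero, one_mul]; exact RG_mono hS
    · have hE := hG1 μ ρ hbar
      refine RG_div (j := 0) (E := eig (Polynomial.C q) Polynomial.X μ - eig (Polynomial.C q) Polynomial.X ρ) hθ ?_ ?_
      · rw [← Polynomial.coe_evalRingHom, map_sub, map_eig, map_eig, sub_ne_zero]
        simpa using hE
      · rw [pow_zero, one_mul, hrec2]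
        apply RG_sum
        intro ν hν
        rw [Finset.mem_erase] at hν
        by_cases hlt : key ν < key ρ
        · refine RG_mul (k := 0) (m := 1) ?_ ?_
          · by_cases hνμ : ν = μ
            · subst hνμ; rw [h1]; exact RG_one
            · exact RG_mono (hgood ν hν.2 hlt hνμ)
          · rw [pow_one]
            exact (hco ν ρ).2.2.1 hν.1.symm
        · have : d ν ρ = 0 := (hco ν ρ).2.1 hν.1.symm hlt
          rw [this, map_zero, mul_zero]
          exact RG_zero _
  intro m
  have hcb : ∀ ν, coeff m (bc F b ν) = algebraMap K F (coeff m (BB σ l g ν)) := by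
    intro ν; rw [bc_apply, MvPolynomial.coeff_map, hb]
  have hμ : μ ∈ c.support := by rw [Finsupp.mem_support_iff, h1]; exact one_ne_zero
  rw [hxs, MvPolynomial.coeff_sum, ← Finset.add_sum_erase _ _ hμ, h1, one_smul, hcb, add_sub_cancel_left]
  apply RG_sum
  intro ν hν
  rw [MvPolynomial.coeff_smul, smul_eq_mul, hcb, ← hθK]
  exact RG_mul (k := 1) (m := 0) (main ν (Finset.ne_of_mem_erase hν)) (by simp)

end MacAux
end MacAuxSec9

open MvPolynomial
noncomputable section MacAuxSec10
namespace MacAux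
set_option linter.unusedSectionVars false

variable {F : Type} [Field F]

lemma scale_monomial (γ : ℕ+ → F) (m : ℕ+ →₀ ℕ) (a : F) : 
    scaleHom γ (monomial m a) = monomial m (a * m.prod fun k e => γ k ^ e) := by
  rw [scaleHom, MvPolynomial.aeval_monomial, MvPolynomial.monomial_eq (a := a * _), C_mul, MvPolynomial.algebraMap_eq, mul_assoc]
  congr 1
  rw [Finsupp.prod, Finsupp.prod, Finsupp.prod, map_prod, ← Finset.prod_mul_distrib]
  apply Finset.prod_congr rfl
  intro k _
  rw [mul_pow, C_pow]

lemma wc_mul (c γ : ℕ+ → F) (m : ℕ+ →₀ ℕ) : wc (fun k => c k * γ k) m = (m.prod fun k e => γ k ^ e) * wc c m := by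
  rw [wc, wc, Finsupp.prod, ← Finset.prod_mul_distrib]
  apply Finset.prod_congr rfl
  intro k _
  rw [mul_pow]; ring

lemma ipL_scale (c γ : ℕ+ → F) (f g : SymFn F) : ipL c (scaleHom γ f) g = ipL (fun k => c k * γ k) f g := by
  induction f using MvPolynomial.induction_on' with
  | add f f' hf hf' => simp only [map_add, LinearMap.add_apply, hf, hf']
  | monomial m a =>
    rw [scale_monomial, ipL_monomial, ipL_monomial, wc_mul]; ring

variable [CharZero F]

lemma Tri_Up {p : Multiset ℕ+ → SymFn F →ₗ[F] F} (hp : Tri p hP) {ν lam : Multiset ℕ+} (h : key lam ≤ key ν) {f : SymFn F}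
    (hf : f ∈ Up ν) : p lam f = 0 := by
  have : Up ν ≤ LinearMap.ker (p lam) := by
    apply Submodule.span_le.2
    rintro _ ⟨ρ, ⟨h1, h2⟩, rfl⟩
    exact (hp ρ lam).1 (lt_of_le_of_lt h h1)
  exact this hf

lemma Tri_Dop {p : Multiset ℕ+ → SymFn F →ₗ[F] F} (hp : Tri p hP) (q s : F) {ν lam : Multiset ℕ+} (h : key lam ≤ key ν) :
    p lam (Dop q s (hP ν)) = if lam = ν then eig q s ν else 0 := by
  have h1 := Tri_Up hp h (Dop_UB (UB_hP (R := F)) q s ν)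
  rw [map_sub, sub_eq_zero, map_smul, smul_eq_mul] at h1
  rw [h1]
  split_ifs with h2
  · rw [(hp ν lam).2 h2, mul_one]
  · rw [(hp ν lam).1 (lt_of_le_of_ne h fun h3 => h2 (key_inj h3)), mul_zero]

section Mac
variable {q t : F} {P : Multiset ℕ+ → SymFn F}

/-- the scaling factors -/
def gam (q t : F) (k : ℕ+) : F := (1 - q ^ (k:ℕ)) / (1 - t ^ (k:ℕ))
/-- inverse scaling factors -/
def gam' (q t : F) (k : ℕ+) : F := (1 - t ^ (k:ℕ)) / (1 - q ^ (k:ℕ))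
/-- norms -/
def NN (q t : F) (P : Multiset ℕ+ → SymFn F) (μ : Multiset ℕ+) : F := innerQT q t (P μ) (P μ)

lemma Qprime_eq (μ : Multiset ℕ+) : Qprime q t P μ = (NN q t P μ)⁻¹ • scaleHom (gam q t) (P μ) := by
  rw [Qprime, Qfam, map_smul]; rfl

lemma hallP_scale (hP : IsMacdonaldBasis q t P)
    (μ lam : Multiset ℕ+) : hallP P lam (scaleHom (gam q t) (P μ)) = if lam = μ then NN q t P μ else 0 := by
  have h : hallP P lam (scaleHom (gam q t) (P μ)) = innerQT q t (P μ) (P lam) := by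
    change ipL (fun _ => (1:F)) (scaleHom (gam q t) (P μ)) (P lam) = _
    rw [ipL_scale]
    simp only [one_mul]
    rfl
  rw [h]
  split_ifs with h1
  · rw [h1, NN]
  · exact hP.2 _ _ (fun h => h1 h.symm)

lemma hallP_gam' (hq : ∀ k : ℕ+, 1 - q ^ (k:ℕ) ≠ 0) (ht : ∀ k : ℕ+, 1 - t ^ (k:ℕ) ≠ 0)
    (lam : Multiset ℕ+) (f : SymFn F) : hallP P lam f = ipL (gam' q t) (scaleHom (gam q t) (P lam)) f := by
  rw [ipL_scale]
  have : (fun k => gam' q t k * gam q t k) = fun _ => 1 := by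
    funext k
    have h1 := hq k
    have h2 := ht k
    rw [gam, gam']; field_simp
  rw [this, ipL_comm]; rfl

lemma NN_ne (hq : ∀ k : ℕ+, 1 - q ^ (k:ℕ) ≠ 0) (ht : ∀ k : ℕ+, 1 - t ^ (k:ℕ) ≠ 0) (hP : IsMacdonaldBasis q t P)
    (μ : Multiset ℕ+) : NN q t P μ ≠ 0 := by
  intro h
  have hp := Tri_P hP.1
  have h0 : scaleHom (gam q t) (P μ) = 0 := by
    apply Tri_zero hp UB_hP
    intro lam
    rw [hallP_scale hP, h, ite_self]
  have h1 := (hp μ μ).2 rfl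
  rw [hallP_gam' hq ht, h0, map_zero, LinearMap.zero_apply] at h1
  exact zero_ne_one h1

lemma hallP_Q (hq : ∀ k : ℕ+, 1 - q ^ (k:ℕ) ≠ 0) (ht : ∀ k : ℕ+, 1 - t ^ (k:ℕ) ≠ 0) (hP : IsMacdonaldBasis q t P)
    (μ lam : Multiset ℕ+) : hallP P lam (Qprime q t P μ) = if lam = μ then 1 else 0 := by
  rw [Qprime_eq, map_smul, hallP_scale hP, smul_eq_mul]
  split_ifs
  · exact inv_mul_cancel₀ (NN_ne hq ht hP μ)
  · rw [mul_zero]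

lemma Q_repr (hq : ∀ k : ℕ+, 1 - q ^ (k:ℕ) ≠ 0) (ht : ∀ k : ℕ+, 1 - t ^ (k:ℕ) ≠ 0) (hP : IsMacdonaldBasis q t P)
    {B : Multiset ℕ+ → SymFn F} (hB : UB B) (b : Module.Basis (Multiset ℕ+) F (SymFn F)) (hb : ∀ ν, b ν = B ν) (μ : Multiset ℕ+) :
    b.repr (Qprime q t P μ) μ = 1 ∧ ∀ ρ, key ρ < key μ → b.repr (Qprime q t P μ) ρ = 0 := by
  have hbB : (b : Multiset ℕ+ → SymFn F) = B := funext hb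
  apply Tri_repr (p := hallP P) b
  · rw [hbB]; exact Tri_UB (Tri_P hP.1) hB
  · rw [hallP_Q hq ht hP, if_pos rfl]
  · intro lam h; rw [hallP_Q hq ht hP, if_neg h]

lemma hallP_DQ_low (hq : ∀ k : ℕ+, 1 - q ^ (k:ℕ) ≠ 0) (ht : ∀ k : ℕ+, 1 - t ^ (k:ℕ) ≠ 0) (hP : IsMacdonaldBasis q t P)
    (s : F) {μ lam : Multiset ℕ+} (h : key lam ≤ key μ) : 
    hallP P lam (Dop q s (Qprime q t P μ)) = if lam = μ then eig q s μ else 0 := by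
  have hp := Tri_P hP.1
  let b := basisOf (UB_hP (R := F))
  obtain ⟨h1, h2⟩ := Q_repr hq ht hP UB_hP b (basisOf_apply _) μ
  have hx : Qprime q t P μ = ∑ ν ∈ (b.repr (Qprime q t P μ)).support, b.repr (Qprime q t P μ) ν • MacAux.hP ν := by
    conv_lhs => rw [← b.linearCombination_repr (Qprime q t P μ), Finsupp.linearCombination_apply]
    rw [Finsupp.sum]
    apply Finset.sum_congr rfl
    intro ν _
    rw [basisOf_apply]
  set c := b.repr (Qprime q t P μ)
  have hμ : μ ∈ c.support := by rw [Finsupp.mem_support_iff, h1]; exact one_ne_zero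
  rw [hx, map_sum, map_sum, ← Finset.add_sum_erase _ _ hμ, h1, one_smul, Tri_Dop hp q s h, Finset.sum_eq_zero, add_zero]
  intro ν hν
  rw [Finset.mem_erase, Finsupp.mem_support_iff] at hν
  have hlt : key μ < key ν := by
    rcases lt_trichotomy (key μ) (key ν) with h3 | h3 | h3
    · exact h3
    · exact absurd (key_inj h3).symm hν.1
    · exact absurd (h2 ν h3) hν.2
  rw [map_smul, map_smul, Tri_Dop hp q s (h.trans hlt.le), if_neg, smul_zero]
  rintro rfl
  exact absurd hlt (not_lt.2 h)

lemma Q_eig (hq : ∀ k : ℕ+, 1 - q ^ (k:ℕ) ≠ 0) (ht : ∀ k : ℕ+, 1 - t ^ (k:ℕ) ≠ 0) (ht0 : t ≠ 0) (hP : IsMacdonaldBasis q t P)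
    (μ : Multiset ℕ+) : Dop q t⁻¹ (Qprime q t P μ) = eig q t⁻¹ μ • Qprime q t P μ := by
  have hp := Tri_P hP.1
  rw [← sub_eq_zero]
  apply Tri_zero hp UB_hP
  intro lam
  rw [map_sub, map_smul, hallP_Q hq ht hP, sub_eq_zero]
  rcases le_or_gt (key lam) (key μ) with h | h
  · rw [hallP_DQ_low hq ht hP _ h]; simp
  · have hne : lam ≠ μ := by rintro rfl; exact lt_irrefl _ h
    rw [if_neg hne, smul_zero, hallP_gam' hq ht]
    have hs := Dop_selfadj (gam' q t) q t t⁻¹ (by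
      intro i
      have h1 := hq (Nat.succPNat i)
      have h3 : t ^ (i+1) ≠ 0 := pow_ne_zero _ ht0
      rw [gam']
      simp only [Nat.succPNat_coe, Nat.succ_eq_add_one] at h1 ⊢
      rw [inv_pow]
      field_simp
      ring)
    have e : ∀ ν, scaleHom (gam q t) (P ν) = NN q t P ν • Qprime q t P ν := by
      intro ν; rw [Qprime_eq, smul_smul, mul_inv_cancel₀ (NN_ne hq ht hP ν), one_smul]
    rw [← hs, ipL_comm, e, Qprime_eq μ, map_smul, map_smul, LinearMap.smul_apply, map_smul, ← hallP_gam' hq ht, hallP_DQ_low hq ht hP _ h.le, 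
      if_neg hne.symm, smul_zero, smul_zero]
end Mac

end MacAux
end MacAuxSec10

open MvPolynomial
noncomputable section MacAuxSec11
namespace MacAux
set_option linter.unusedSectionVars false

/-- number of parts larger than `j` -/
def NN' (j : ℕ) (μ : Multiset ℕ+) : ℕ := μ.countP (fun a : ℕ+ => j < (a : ℕ))

lemma NN'_cons (j : ℕ) (n : ℕ+) (μ : Multiset ℕ+) : NN' j (n ::ₘ μ) = NN' j μ + if j < (n:ℕ) then 1 else 0 := by
  simp [NN', Multiset.countP_cons]

lemma NN'_count (j : ℕ) (μ : Multiset ℕ+) : NN' j μ = μ.count (Nat.succPNat j) + NN' (j+1) μ := by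
  induction μ using Multiset.induction with
  | empty => simp [NN']
  | cons a μ ih =>
    rw [NN'_cons, NN'_cons, ih, Multiset.count_cons]
    have h : (Nat.succPNat j = a) ↔ j + 1 = (a:ℕ) := by
      rw [← PNat.coe_inj]; simp
    simp only [h]
    split_ifs <;> omega

lemma eq_of_NN' {μ ρ : Multiset ℕ+} (h : ∀ j, NN' j μ = NN' j ρ) : μ = ρ := by
  ext a
  obtain ⟨j, rfl⟩ : ∃ j, a = Nat.succPNat j := ⟨a.natPred, by simp⟩
  have h1 := NN'_count j μ
  have h2 := NN'_count j ρ
  have := h j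
  have := h (j+1)
  omega

lemma bar_of_NN' {l : ℕ} {μ ρ : Multiset ℕ+} (h : ∀ j, NN' j μ ≡ NN' j ρ [MOD l]) : bar l μ = bar l ρ := by
  ext a
  obtain ⟨j, rfl⟩ : ∃ j, a = Nat.succPNat j := ⟨a.natPred, by simp⟩
  rw [count_bar, count_bar]
  have h1 := h j
  rw [NN'_count j μ, NN'_count j ρ] at h1
  exact Nat.ModEq.add_right_cancel (h (j+1)) h1

lemma NN'_of_bar {l : ℕ} {μ ρ : Multiset ℕ+} (h : bar l μ = bar l ρ) (j : ℕ) : NN' j μ ≡ NN' j ρ [MOD l] := by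
  rw [← quo_bar l μ, ← quo_bar l ρ, h]
  simp only [NN', Multiset.countP_add, Multiset.countP_nsmul]
  apply Nat.ModEq.add_right
  simp [Nat.ModEq]

/-- derivative of the eigenvalue -/
def dE {R : Type} [CommRing R] (q s : R) (μ : Multiset ℕ+) : R := 
  (Polynomial.derivative (eig (Polynomial.C q) Polynomial.X μ)).eval s

lemma dE_zero {R : Type} [CommRing R] (q s : R) : dE q s 0 = 0 := by simp [dE, eig_zero]
lemma dE_cons {R : Type} [CommRing R] (q s : R) {n : ℕ+} {μ : Multiset ℕ+} (h : ∀ a ∈ μ, a ≤ n) :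
    dE q s (n ::ₘ μ) = eig q s μ + s * dE q s μ - q ^ (n:ℕ) := by
  have e : (eig (Polynomial.C q) Polynomial.X μ).eval s = eig q s μ := by
    have := map_eig (Polynomial.evalRingHom s) (Polynomial.C q) Polynomial.X μ
    simpa using this
  rw [dE, eig_cons _ _ h, dE]
  have e2 : Polynomial.derivative ((Polynomial.C q : Polynomial R) ^ (n:ℕ)) = 0 := by
    rw [← Polynomial.C_pow, Polynomial.derivative_C]
  simp [e, e2]
  ring

lemma map_dE {R S : Type} [CommRing R] [CommRing S] (f : R →+* S) (q s : R) (μ : Multiset ℕ+) :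
    f (dE q s μ) = dE (f q) (f s) μ := by
  induction μ using maxInd with
  | h0 => simp [dE_zero]
  | h1 n μ hn ih => simp [dE_cons _ _ hn, map_eig, ih]

/-- truncated sum of coefficients -/
def Sj {R : Type} [CommRing R] (j : ℕ) : Polynomial R →ₗ[R] R := ∑ i ∈ Finset.range (j+1), Polynomial.lcoeff R i

lemma Sj_apply {R : Type} [CommRing R] (j : ℕ) (p : Polynomial R) : Sj j p = ∑ i ∈ Finset.range (j+1), p.coeff i := by
  simp [Sj, LinearMap.sum_apply]

lemma Sj_C_mul {R : Type} [CommRing R] (j : ℕ) (z : R) (p : Polynomial R) : Sj j (Polynomial.C z * p) = z * Sj j p := by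
  rw [← Polynomial.smul_eq_C_mul, map_smul, smul_eq_mul]

lemma Sj_X_pow {R : Type} [CommRing R] (j n : ℕ) : Sj j (Polynomial.X ^ n : Polynomial R) = if j < n then 0 else 1 := by
  rw [Sj_apply]
  simp only [Polynomial.coeff_X_pow]
  rw [Finset.sum_ite_eq']
  simp only [Finset.mem_range]
  split_ifs <;> first | rfl | omega

lemma NN'_eq_zero {j : ℕ} {n : ℕ+} {μ : Multiset ℕ+} (h : ∀ a ∈ μ, a ≤ n) (hj : ¬ j < (n:ℕ)) : NN' j μ = 0 := by
  rw [NN', Multiset.countP_eq_zero]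
  intro a ha
  have : (a:ℕ) ≤ n := h a ha
  omega

lemma Sj_eig {R : Type} [CommRing R] (j : ℕ) (z : R) (μ : Multiset ℕ+) : 
    Sj j (eig Polynomial.X (Polynomial.C z) μ) = z ^ NN' j μ := by
  induction μ using maxInd with
  | h0 => 
    have := Sj_X_pow (R := R) j 0
    simp only [pow_zero] at this
    rw [eig_zero, this]; simp [NN']
  | h1 n μ hn ih =>
    have e : (1 - Polynomial.C z : Polynomial R) = Polynomial.C (1 - z) := by simp
    rw [eig_cons _ _ hn, map_add, Sj_C_mul, e, Sj_C_mul, ih, Sj_X_pow, NN'_cons]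
    split_ifs with h
    · ring
    · rw [NN'_eq_zero hn h]; ring

lemma Sj_dE {R : Type} [CommRing R] (j : ℕ) (z : R) (μ : Multiset ℕ+) : 
    z * Sj j (dE Polynomial.X (Polynomial.C z) μ) = NN' j μ * z ^ NN' j μ := by
  induction μ using maxInd with
  | h0 => simp [dE_zero, NN']
  | h1 n μ hn ih =>
    rw [dE_cons _ _ hn, map_sub, map_add, Sj_C_mul, Sj_eig, Sj_X_pow, NN'_cons, mul_sub, mul_add, ih]
    split_ifs with h
    · push_cast; ring
    · rw [NN'_eq_zero hn h]; push_cast; ring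

lemma ratX_eig (z : ℂ) (μ : Multiset ℕ+) : eig qK (RatFunc.C z) μ = algebraMap (Polynomial ℂ) KK (eig Polynomial.X (Polynomial.C z) μ) := by
  rw [map_eig, RatFunc.algebraMap_X, RatFunc.algebraMap_C]; rfl
lemma ratX_dE (z : ℂ) (μ : Multiset ℕ+) : dE qK (RatFunc.C z) μ = algebraMap (Polynomial ℂ) KK (dE Polynomial.X (Polynomial.C z) μ) := by
  rw [map_dE, RatFunc.algebraMap_X, RatFunc.algebraMap_C]; rfl

lemma pow_modEq {l : ℕ} (hl : 0 < l) {z : ℂ} (hz : IsPrimitiveRoot z l) (a b : ℕ) : z ^ a = z ^ b ↔ a ≡ b [MOD l] := by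
  have h : IsOfFinOrder z := isOfFinOrder_iff_pow_eq_one.2 ⟨l, hl, hz.pow_eq_one⟩
  rw [h.pow_eq_pow_iff_modEq, ← hz.eq_orderOf]

lemma evtau2 {K : Type} [Field K] (σ : K) (c : Polynomial K) : 
    (Polynomial.derivative (tau σ ^ 2 * c)).eval σ = 0 := by
  simp [tau, Polynomial.derivative_mul, Polynomial.derivative_pow]

lemma G1 {l : ℕ} (hl : 0 < l) {z : ℂ} (hz : IsPrimitiveRoot z l) (μ ρ : Multiset ℕ+) (h : bar l μ ≠ bar l ρ) : 
    eig qK (RatFunc.C z) μ ≠ eig qK (RatFunc.C z) ρ := by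
  intro he
  apply h
  apply bar_of_NN'
  intro j
  rw [ratX_eig, ratX_eig] at he
  have := congrArg (Sj j) (RatFunc.algebraMap_injective ℂ he)
  rw [Sj_eig, Sj_eig] at this
  exact (pow_modEq hl hz _ _).1 this

lemma G2 {l : ℕ} (hl : 0 < l) {z : ℂ} (hz : IsPrimitiveRoot z l) (μ ρ : Multiset ℕ+) (h : μ ≠ ρ) (hb : bar l μ = bar l ρ) : 
    ¬ (tau (RatFunc.C z : KK) ^ 2 ∣ eig (Polynomial.C qK) Polynomial.X μ - eig (Polynomial.C qK) Polynomial.X ρ) := by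
  rintro ⟨c, hc⟩
  apply h
  apply eq_of_NN'
  intro j
  have hd : dE qK (RatFunc.C z) μ = dE qK (RatFunc.C z) ρ := by
    rw [← sub_eq_zero, dE, dE, ← Polynomial.eval_sub, ← Polynomial.derivative_sub, hc, evtau2]
  rw [ratX_dE, ratX_dE] at hd
  have h1 := congrArg (fun x => z * Sj j x) (RatFunc.algebraMap_injective ℂ hd)
  simp only [Sj_dE] at h1
  have h3 : z ^ NN' j μ = z ^ NN' j ρ := by
    exact (pow_modEq hl hz _ _).2 (NN'_of_bar hb j)
  have hz0 : z ≠ 0 := hz.ne_zero hl.ne'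
  rw [h3] at h1
  exact_mod_cast mul_right_cancel₀ (pow_ne_zero _ hz0) h1

end MacAux
end MacAuxSec11

open MvPolynomial
noncomputable section MacAuxSec12
namespace MacAux
set_option linter.unusedSectionVars false

section Ev
variable {K : Type} [Field K]

lemma ratEval_of {c : K} {b p : Polynomial K} {x : RatFunc K} (hb : b.eval c ≠ 0)
    (h : algebraMap (Polynomial K) (RatFunc K) b * x = algebraMap (Polynomial K) (RatFunc K) p) : 
    RatFunc.eval (RingHom.id K) c x = p.eval c / b.eval c := by
  have hd : algebraMap (Polynomial K) (RatFunc K) x.denom ≠ 0 := by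
    rw [Ne, map_eq_zero_iff _ (RatFunc.algebraMap_injective K)]; exact x.denom_ne_zero
  have h1 : b * x.num = p * x.denom := by
    apply RatFunc.algebraMap_injective K
    rw [map_mul, map_mul, ← h]
    conv_rhs => rw [← RatFunc.num_div_denom x]
    rw [RatFunc.num_div_denom x]
    have : algebraMap (Polynomial K) (RatFunc K) x.num = x * algebraMap (Polynomial K) (RatFunc K) x.denom := by
      rw [← div_eq_iff hd, RatFunc.num_div_denom]
    rw [this]; ring
  have h2 : b.eval c * x.num.eval c = p.eval c * x.denom.eval c := by
    rw [← Polynomial.eval_mul, ← Polynomial.eval_mul, h1]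
  have h3 : x.denom.eval c ≠ 0 := by
    intro h0
    rw [h0, mul_zero] at h2
    have h4 := (mul_eq_zero.1 h2).resolve_left hb
    obtain ⟨u, v, huv⟩ := x.isCoprime_num_denom
    have := congrArg (Polynomial.eval c) huv
    simp [h0, h4] at this
  rw [RatFunc.eval, Polynomial.eval₂_id, Polynomial.eval₂_id, div_eq_div_iff h3 hb]
  linear_combination h2

/-- the embedding `s ↦ t⁻¹` -/
def th (K : Type) [Field K] : Polynomial K →+* RatFunc K := Polynomial.eval₂RingHom (algebraMap K (RatFunc K)) (RatFunc.X)⁻¹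

lemma ev2_X (p : Polynomial K) : 
    Polynomial.eval₂ (algebraMap K (RatFunc K)) RatFunc.X p = algebraMap (Polynomial K) (RatFunc K) p := by
  have : Polynomial.eval₂RingHom (algebraMap K (RatFunc K)) RatFunc.X = algebraMap (Polynomial K) (RatFunc K) := by
    apply Polynomial.ringHom_ext
    · intro a
      simp [RatFunc.algebraMap_C, RatFunc.algebraMap_eq_C]
    · simp [RatFunc.algebraMap_X]
  exact RingHom.congr_fun this p

lemma th_reflect {N : ℕ} (p : Polynomial K) (h : p.natDegree ≤ N) : 
    th K p * RatFunc.X ^ N = algebraMap (Polynomial K) (RatFunc K) (p.reflect N) := by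
  have : Invertible (RatFunc.X : RatFunc K) := invertibleOfNonzero RatFunc.X_ne_zero
  have h1 := Polynomial.eval₂_reflect_mul_pow (algebraMap K (RatFunc K)) (RatFunc.X : RatFunc K) N (p.reflect N) (Polynomial.natDegree_reflect_le.trans (by simp [h]))
  rw [Polynomial.reflect_reflect, invOf_eq_inv] at h1
  rw [th, Polynomial.coe_eval₂RingHom, h1, ev2_X]

lemma ev_reflect {N : ℕ} {c : K} (hc : c ≠ 0) (p : Polynomial K) (h : p.natDegree ≤ N) : 
    p.eval c⁻¹ * c ^ N = (p.reflect N).eval c := by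
  have : Invertible c := invertibleOfNonzero hc
  have h1 := Polynomial.eval₂_reflect_mul_pow (RingHom.id K) c N (p.reflect N) (Polynomial.natDegree_reflect_le.trans (by simp [h]))
  rw [Polynomial.reflect_reflect, invOf_eq_inv] at h1
  simpa [Polynomial.eval₂_id] using h1

lemma th_inj : Function.Injective (th K) := by
  rw [injective_iff_map_eq_zero]
  intro p hp
  have h := th_reflect p le_rfl
  rw [hp, zero_mul, eq_comm, map_eq_zero_iff _ (RatFunc.algebraMap_injective K)] at h
  exact Polynomial.reflect_eq_zero_iff.1 h

lemma ratEval_RG {c k : K} (hc : c ≠ 0) {x : RatFunc K} (h : RG (th K) c⁻¹ 1 (x - algebraMap K (RatFunc K) k)) : 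
    RatFunc.eval (RingHom.id K) c x = k := by
  obtain ⟨a, b, h1, h2⟩ := h
  set p := tau c⁻¹ ^ 1 * a with hp
  set N := max b.natDegree p.natDegree
  have e1 := th_reflect b (le_max_left _ _ : _ ≤ N)
  have e2 := th_reflect p (le_max_right _ _ : _ ≤ N)
  have f1 := ev_reflect hc b (le_max_left _ _ : _ ≤ N)
  have f2 := ev_reflect hc p (le_max_right _ _ : _ ≤ N)
  have hb : (b.reflect N).eval c ≠ 0 := by rw [← f1]; exact mul_ne_zero h1 (pow_ne_zero _ hc)
  have hp0 : (p.reflect N).eval c = 0 := by rw [← f2, hp]; simp [tau]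
  rw [ratEval_of (p := p.reflect N + b.reflect N * Polynomial.C k) hb]
  · rw [Polynomial.eval_add, hp0, Polynomial.eval_mul, Polynomial.eval_C, zero_add, mul_div_cancel_left₀ _ hb]
  · rw [map_add, map_mul, ← e1, ← e2, ← h2, RatFunc.algebraMap_C, ← RatFunc.algebraMap_eq_C]
    ring

end Ev

lemma coeff_specT (c : KK) (f : SymFn FF) (m : ℕ+ →₀ ℕ) : coeff m (specT c f) = evalT c (coeff m f) := by
  classical
  rw [specT, coeff_sum]
  simp only [coeff_monomial]
  rw [Finset.sum_ite_eq']
  split_ifs with h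
  · rfl
  · rw [notMem_support_iff.1 h, evalT, RatFunc.eval_zero]

end MacAux
end MacAuxSec12

open MvPolynomial
noncomputable section MacAuxSec13
namespace MacAux
set_option linter.unusedSectionVars false

lemma ratX_pow_ne {K : Type} [Field K] (k : ℕ+) : (1 : RatFunc K) - RatFunc.X ^ (k:ℕ) ≠ 0 := by
  have h : (1 : RatFunc K) - RatFunc.X ^ (k:ℕ) = algebraMap (Polynomial K) (RatFunc K) (1 - Polynomial.X ^ (k:ℕ)) := by
    simp [RatFunc.algebraMap_X]
  rw [h, Ne, map_eq_zero_iff _ (RatFunc.algebraMap_injective K)]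
  intro h0
  have := congrArg (Polynomial.eval 0) h0
  simp at this

lemma hqF (k : ℕ+) : 1 - qF ^ (k:ℕ) ≠ 0 := by
  have : 1 - qF ^ (k:ℕ) = RatFunc.C (1 - qK ^ (k:ℕ)) := by simp [qF]
  rw [this]
  exact (map_ne_zero _).2 (ratX_pow_ne k)

lemma htF (k : ℕ+) : 1 - tF ^ (k:ℕ) ≠ 0 := ratX_pow_ne k

section Gen
variable {K : Type} [Field K] [CharZero K] [CharZero (RatFunc K)]

lemma ratEval_Q {l : ℕ} (hl : 0 < l) {c q : K} (hc : c ≠ 0) (hσ : c⁻¹ ^ l = 1) {P : Multiset ℕ+ → SymFn (RatFunc K)} 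
    (hq : ∀ k : ℕ+, 1 - (algebraMap K (RatFunc K) q) ^ (k:ℕ) ≠ 0)
    (hP : IsMacdonaldBasis (algebraMap K (RatFunc K) q) RatFunc.X P) {g : Multiset ℕ+ → SymFn K}
    (hg : ∀ lam, g lam - MacAux.hP lam ∈ Up lam ∧ (bar l lam = lam → Dop q c⁻¹ (g lam) = eig q c⁻¹ lam • g lam))
    (hG1 : ∀ μ ρ, bar l μ ≠ bar l ρ → eig q c⁻¹ μ ≠ eig q c⁻¹ ρ)
    (hG2 : ∀ μ ρ, μ ≠ ρ → bar l μ = bar l ρ → ¬ (tau c⁻¹ ^ 2 ∣ eig (Polynomial.C q) Polynomial.X μ - eig (Polynomial.C q) Polynomial.X ρ))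
    (μ : Multiset ℕ+) (m : ℕ+ →₀ ℕ) : 
    RatFunc.eval (RingHom.id K) c (coeff m (Qprime (algebraMap K (RatFunc K) q) RatFunc.X P μ)) = coeff m (BB c⁻¹ l g μ) := by
  have hU : UB (BB c⁻¹ l g) := BB_UB (inv_ne_zero hc) (fun ν => (hg ν).1)
  have hD := Dop_BB (q := q) hl hσ (g := g) (fun lam h => (hg lam).2 h)
  apply ratEval_RG hc
  have hUF : UB (fun ν => MvPolynomial.map (algebraMap K (RatFunc K)) (BB c⁻¹ l g ν)) := map_UB _ hU
  obtain ⟨r1, r2⟩ := Q_repr hq ratX_pow_ne hP hUF (bc (RatFunc K) (basisOf hU)) (fun ν => by rw [bc_apply, basisOf_apply]) μ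
  have hth : th K Polynomial.X = RatFunc.X⁻¹ := by simp [th]
  refine recursion (q := q) (th K) th_inj ?_ hl hσ (basisOf hU) (basisOf_apply hU) hU hD hG1 hG2 _ μ ?_ r1 r2 m
  · ext x; simp [th]
  · rw [hth]
    exact Q_eig hq ratX_pow_ne RatFunc.X_ne_zero hP μ
end Gen

lemma specT_Q {l : ℕ} (hl : 0 < l) {zeta : ℂ} (hz : IsPrimitiveRoot zeta l) {P : Multiset ℕ+ → SymFn FF} 
    (hP : IsMacdonaldBasis qF tF P) {g : Multiset ℕ+ → SymFn KK}
    (hg : ∀ lam, g lam - MacAux.hP lam ∈ Up lam ∧ (bar l lam = lam → Dop qK (RatFunc.C zeta)⁻¹ (g lam) = eig qK (RatFunc.C zeta)⁻¹ lam • g lam))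
    (μ : Multiset ℕ+) : 
    specT (RatFunc.C zeta) (Qprime qF tF P μ) = BB (RatFunc.C zeta)⁻¹ l g μ := by
  have hc : (RatFunc.C zeta : KK) ≠ 0 := (map_ne_zero _).2 (hz.ne_zero hl.ne')
  have hinv : (RatFunc.C zeta : KK)⁻¹ = RatFunc.C zeta⁻¹ := (map_inv₀ _ _).symm
  have hσ : ((RatFunc.C zeta : KK)⁻¹) ^ l = 1 := by
    rw [hinv, ← map_pow, inv_pow, hz.pow_eq_one, inv_one, map_one]
  have hqq : qF = algebraMap KK FF qK := by rw [RatFunc.algebraMap_eq_C]; rfl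
  have hq := hqF
  rw [hqq] at hP hq ⊢
  have G1' : ∀ μ ρ, bar l μ ≠ bar l ρ → eig qK (RatFunc.C zeta : KK)⁻¹ μ ≠ eig qK (RatFunc.C zeta : KK)⁻¹ ρ := by
    rw [hinv]; exact G1 hl hz.inv
  have G2' : ∀ μ ρ, μ ≠ ρ → bar l μ = bar l ρ → ¬ (tau (RatFunc.C zeta : KK)⁻¹ ^ 2 ∣ eig (Polynomial.C qK) Polynomial.X μ - eig (Polynomial.C qK) Polynomial.X ρ) := by
    rw [hinv]; exact G2 hl hz.inv
  ext m
  rw [coeff_specT, evalT]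
  exact ratEval_Q hl hc hσ hq hP hg G1' G2' μ m

lemma BB_rep {K : Type} [Field K] [CharZero K] {l : ℕ} (hl : 0 < l) (σ : K) {g : Multiset ℕ+ → SymFn K}
    (hg : g 0 - MacAux.hP 0 ∈ Up 0) (a : ℕ+) : BB σ l g (Multiset.replicate l a) = Fa σ l a := by
  have h1 := BB_add (σ := σ) hl g a 0
  have h2 := BB_red (σ := σ) hl g 0
  rw [bar_zero] at h2
  rw [add_zero, Multiset.nsmul_singleton, h2, g_zero hg, mul_one] at h1
  exact h1

lemma sum_rep {n : ℕ} {mu : Multiset ℕ+} (hmu : wt mu = n) (f : ℕ → ℕ) (hf : f 0 = 0) (a : ℕ+) :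
    (∑ i ∈ Finset.range n, Multiset.replicate (f (Multiset.count (Nat.succPNat i) mu)) (Nat.succPNat i)).count a = f (mu.count a) := by
  rw [Multiset.count_sum']
  simp only [Multiset.count_replicate]
  obtain ⟨j, rfl⟩ : ∃ j, a = Nat.succPNat j := ⟨a.natPred, by simp⟩
  by_cases hj : j < n
  · rw [Finset.sum_eq_single j]
    · simp
    · intro i _ hi
      rw [if_neg]
      intro h; exact hi (Nat.succPNat_injective h)
    · intro h; exact absurd (Finset.mem_range.2 hj) h
  · have h0 : mu.count (Nat.succPNat j) = 0 := by
      rw [Multiset.count_eq_zero]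
      intro hm
      have := le_wt_of_mem hm
      rw [Nat.succPNat_coe] at this
      omega
    rw [h0, hf]
    apply Finset.sum_eq_zero
    intro i hi
    rw [if_neg]
    intro h
    have := Nat.succPNat_injective h
    rw [Finset.mem_range] at hi
    omega

lemma map_prod_sum {M : Type} [CommMonoid M] (f : ℕ+ → M) (s : Finset ℕ) (c : ℕ → ℕ) (d : ℕ → ℕ+) :
    ((∑ i ∈ s, Multiset.replicate (c i) (d i)).map f).prod = ∏ i ∈ s, f (d i) ^ c i := by
  classical
  induction s using Finset.induction_on with
  | empty => simp
  | insert a s ha ih => rw [Finset.sum_insert ha, Finset.prod_insert ha, Multiset.map_add, Multiset.prod_add, ih]; simp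

theorem final (l : ℕ) (hl : 0 < l) (zeta : ℂ) (hzeta : IsPrimitiveRoot zeta l)
    (n : ℕ) (mu : Multiset ℕ+) (hmu : wt mu = n)
    (P : Multiset ℕ+ → SymFn FF) (hP : IsMacdonaldBasis qF tF P) :
    specT (RatFunc.C zeta) (Qprime qF tF P mu) =
      (∏ i ∈ Finset.range n,
        (specT (RatFunc.C zeta)
            (Qprime qF tF P
              (Multiset.replicate l (Nat.succPNat i)))) ^
          (Multiset.count (Nat.succPNat i) mu / l)) *
      specT (RatFunc.C zeta)
        (Qprime qF tF P
          (∑ i ∈ Finset.range n,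
            Multiset.replicate (Multiset.count (Nat.succPNat i) mu % l)
              (Nat.succPNat i))) := by
  have hinv : (RatFunc.C zeta : KK)⁻¹ = RatFunc.C zeta⁻¹ := (map_inv₀ _ _).symm
  have hex := exists_g (q := qK) (σ := (RatFunc.C zeta : KK)⁻¹) hl (by rw [hinv]; exact G1 hl hzeta.inv)
  choose g hg using hex
  have hbar : (∑ i ∈ Finset.range n, Multiset.replicate (Multiset.count (Nat.succPNat i) mu % l) (Nat.succPNat i)) = bar l mu := by
    ext a
    rw [sum_rep hmu (fun m => m % l) (Nat.zero_mod l), count_bar]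
  have hquo : (∑ i ∈ Finset.range n, Multiset.replicate (Multiset.count (Nat.succPNat i) mu / l) (Nat.succPNat i)) = quo l mu := by
    ext a
    rw [sum_rep hmu (fun m => m / l) (Nat.zero_div l), count_quo]
  simp only [specT_Q hl hzeta hP hg, BB_rep hl _ (hg 0).1]
  rw [hbar, BB_red hl, BB]
  congr 1
  rw [← hquo, map_prod_sum]

end MacAux
end MacAuxSec13

noncomputable section

open MvPolynomial

/-- **Factorization of `Q'_μ` at a primitive root of unity** (Theorem 5.1 of the paper).
Let `l > 0`, `ζ` a primitive `l`-th root of unity and `μ = (1^{m_1} 2^{m_2} ⋯ n^{m_n})` a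
partition of `n > 0`.  Writing `m_i = l·q_i + r_i` with `0 ≤ r_i ≤ l-1` and
`μ̄ = (1^{r_1} 2^{r_2} ⋯ n^{r_n})`, one has
`Q'_μ(x;q,ζ) = ∏_{i=1}^n (Q'_{(i^l)}(x;q,ζ))^{q_i} · Q'_{μ̄}(x;q,ζ)`. -/
theorem Qprime_factorization_root_of_unity
    (l : ℕ) (hl : 0 < l) (zeta : ℂ) (hzeta : IsPrimitiveRoot zeta l)
    (n : ℕ) (hn : 0 < n) (mu : Multiset ℕ+) (hmu : wt mu = n)
    (P : Multiset ℕ+ → SymFn FF) (hP : IsMacdonaldBasis qF tF P) :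
    specT (RatFunc.C zeta) (Qprime qF tF P mu) =
      (∏ i ∈ Finset.range n,
        (specT (RatFunc.C zeta)
            (Qprime qF tF P
              (Multiset.replicate l (⟨i + 1, Nat.succ_pos i⟩ : ℕ+)))) ^
          (Multiset.count (⟨i + 1, Nat.succ_pos i⟩ : ℕ+) mu / l)) *
      specT (RatFunc.C zeta)
        (Qprime qF tF P
          (∑ i ∈ Finset.range n,
            Multiset.replicate (Multiset.count (⟨i + 1, Nat.succ_pos i⟩ : ℕ+) mu % l)
              (⟨i + 1, Nat.succ_pos i⟩ : ℕ+))) := by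
  exact MacAux.final l hl zeta hzeta n mu hmu P hP
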